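/- For every t ≥ 0, every Koszul cycle c ∈ ker(d_t) can be written as c = u + d_{t+1}(w), where w ∈ K_{t+1} and u is a k-linear combination of elements of the form g • (Z_{μ_1} · Z_{μ_2} · ⋯ · Z_{μ_s}) with g ∈ GL_n(k) and 0 ≤ μ_1 < μ_2 < ⋯ < μ_s ≤ n-1 satisfying μ_1 + ⋯ + μ_s = t; that is, as a k[GL_n(k)]-module, the Koszul homology H_*(𝔪²) is generated by the squarefree monomials in Z_0, …, Z_{n-1}. -/

import Mathlib

set_option maxHeartbeats 1000000
set_option synthInstance.maxHeartbeats 400000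

open scoped TensorProduct
open MvPolynomial

noncomputable section

variable (k : Type) [Field k] (n : ℕ)

/-- The polynomial ring `S = k[x_1,…,x_n]`. -/
abbrev S := MvPolynomial (Fin n) k

/-- The space `S_1` of linear forms. -/
abbrev S1 := homogeneousSubmodule (Fin n) k 1

/-- The space `S_2` of quadratic forms. -/
abbrev S2 := homogeneousSubmodule (Fin n) k 2

/-- The ambient algebra `S ⊗ Λ(S_2)` containing all terms `K_t = S ⊗ ⋀^t S_2`
of the Koszul complex `K(𝔪², S)`; the product is `(f ⊗ ω)(g ⊗ η) = fg ⊗ ω∧η`. -/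
abbrev KK := (MvPolynomial (Fin n) k) ⊗[k] ExteriorAlgebra k (S2 k n)

variable {k n}

/-- The product of two linear forms, as an element of `S_2`. -/
def mulW (a b : S1 k n) : S2 k n :=
  ⟨(a : S k n) * (b : S k n), by
    rw [mem_homogeneousSubmodule]
    have ha := (mem_homogeneousSubmodule 1 (a : S k n)).1 a.2
    have hb := (mem_homogeneousSubmodule 1 (b : S k n)).1 b.2
    simpa using ha.mul hb⟩

/-- The variable `x_i`, as an element of `S_1`. -/
def xv (i : Fin n) : S1 k n :=
  ⟨X i, by rw [mem_homogeneousSubmodule]; exact isHomogeneous_X _ _⟩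

/-- The quadratic monomial `x_i x_j`, as an element of `S_2`. -/
def q (i j : Fin n) : S2 k n := mulW (xv i) (xv j)

variable (k n)

/-- `K_t = S ⊗ ⋀^t S_2`, as a subspace of the ambient algebra `KK`. -/
def Kt (t : ℕ) : Submodule k (KK k n) :=
  LinearMap.range (TensorProduct.map (LinearMap.id : S k n →ₗ[k] S k n)
    (Submodule.subtype (⋀[k]^t (S2 k n))))

variable {k n}

/-- The family of Koszul differentials, encoded as linear endomorphisms of the
ambient space `KK`: `D t` restricted to `K_t` is the `t`-th Koszul differential
`d_t : K_t → K_{t-1}`, i.e. `d_0 = 0` and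
`d_t(f ⊗ m_1 ∧ ⋯ ∧ m_t) = Σ_j (-1)^{j-1} (f·m_j) ⊗ m_1 ∧ ⋯ ∧ m̂_j ∧ ⋯ ∧ m_t`. -/
def IsKoszulDiff (D : ℕ → KK k n →ₗ[k] KK k n) : Prop :=
  D 0 = 0 ∧
  ∀ (t : ℕ) (f : S k n) (m : Fin (t+1) → S2 k n),
    D (t+1) (f ⊗ₜ[k] (ExteriorAlgebra.ιMulti k (t+1) m : ExteriorAlgebra k (S2 k n)))
      = ∑ j : Fin (t+1), ((-1:ℤ)^(j:ℕ)) •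
          ((f * ((m j : S k n))) ⊗ₜ[k]
            (ExteriorAlgebra.ιMulti k t (fun l => m (j.succAbove l)) : ExteriorAlgebra k (S2 k n)))

/-- The cycle `z_{a,b} = Σ_{σ ∈ 𝔖_{t+1}} sgn(σ) a_{σ(t+1)} ⊗ (b_1 a_{σ(1)} ∧ ⋯ ∧ b_t a_{σ(t)})`. -/
def zel (t : ℕ) (a : Fin (t+1) → S1 k n) (b : Fin t → S1 k n) : KK k n :=
  ∑ σ : Equiv.Perm (Fin (t+1)),
    ((Equiv.Perm.sign σ : ℤ)) •
      (((a (σ (Fin.last t)) : S k n)) ⊗ₜ[k]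
        (ExteriorAlgebra.ιMulti k t (fun j => mulW (b j) (a (σ j.castSucc))) :
          ExteriorAlgebra k (S2 k n)))

/-- The cycle `Z_i` (0-indexed: `Zel i` is the paper's `Z_i` for `0 ≤ i ≤ n-1`), namely
`Z_i = Σ_{j=0}^{i} (-1)^{j} x_j ⊗ (x_0 x_i ∧ ⋯ ∧ x̂_j x_i ∧ ⋯ ∧ x_{i-1} x_i ∧ x_i²)`. -/
def Zel (i : Fin n) : KK k n :=
  ∑ j : Fin ((i:ℕ)+1),
    ((-1:ℤ)^(j:ℕ)) •
      ((X (Fin.castLE i.isLt j) : S k n) ⊗ₜ[k]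
        (ExteriorAlgebra.ιMulti k (i:ℕ)
          (fun l : Fin (i:ℕ) => q (Fin.castLE i.isLt (j.succAbove l)) i) :
            ExteriorAlgebra k (S2 k n)))


open scoped MatrixGroups

/-- The action of `g ∈ GL_n(k)` on `S` by the invertible linear substitution
`x_i ↦ Σ_j g_{ij} x_j` of the variables, as a `k`-algebra homomorphism. -/
def subst (g : GL (Fin n) k) : S k n →ₐ[k] S k n :=
  aeval (fun i => ∑ j, (g : Matrix (Fin n) (Fin n) k) i j • X j)

/-- Linear substitutions preserve homogeneous components. -/
lemma subst_isHomogeneous (g : GL (Fin n) k) {d : ℕ} {f : S k n}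
    (hf : f.IsHomogeneous d) : (subst g f).IsHomogeneous d := by
  have hg : ∀ i, ((∑ j, (g : Matrix (Fin n) (Fin n) k) i j • X j : S k n)).IsHomogeneous 1 := by
    intro i
    rw [← mem_homogeneousSubmodule]
    exact Submodule.sum_mem _ fun j _ => Submodule.smul_mem _ _
      ((mem_homogeneousSubmodule 1 _).2 (isHomogeneous_X _ _))
  simpa [subst] using hf.aeval _ hg

/-- The action of `g ∈ GL_n(k)` on `S_2`. -/
def substS2 (g : GL (Fin n) k) : S2 k n →ₗ[k] S2 k n :=
  LinearMap.restrict (subst g).toLinearMap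
    (fun x hx => by
      rw [mem_homogeneousSubmodule] at hx ⊢
      exact subst_isHomogeneous g hx)

/-- The (diagonal) action of `g ∈ GL_n(k)` on the Koszul complex `K = S ⊗ Λ(S_2)`;
it commutes with the differential and the product. -/
def gact (g : GL (Fin n) k) : KK k n →ₐ[k] KK k n :=
  Algebra.TensorProduct.map (subst g) (ExteriorAlgebra.map (substS2 g))

lemma span_q : Submodule.span k (Set.range (fun p : Fin n × Fin n => (q p.1 p.2 : S2 k n))) = ⊤ := by
  have key : ∀ f : S k n, f ∈ S2 k n →
      f ∈ Submodule.map (S2 k n).subtype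
        (Submodule.span k (Set.range (fun p : Fin n × Fin n => (q p.1 p.2 : S2 k n)))) := by
    intro f hf
    rw [mem_homogeneousSubmodule] at hf
    rw [f.as_sum]
    refine Submodule.sum_mem _ fun d hd => ?_
    have h2 : d.degree = 2 := by
      by_contra h
      exact (mem_support_iff.1 hd) (hf.coeff_eq_zero h)
    have : ∃ i j : Fin n, d = Finsupp.single i 1 + Finsupp.single j 1 := by
      have hc : d.toMultiset.card = 2 := by
        rw [Finsupp.card_toMultiset]; simpa [Finsupp.degree_apply, Finsupp.sum] using h2
      obtain ⟨i, j, hij⟩ := Multiset.card_eq_two.1 hc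
      refine ⟨i, j, ?_⟩
      apply Finsupp.orderIsoMultiset.injective
      simp only [Finsupp.coe_orderIsoMultiset]
      rw [hij]; simp [Finsupp.toMultiset_single]
    obtain ⟨i, j, rfl⟩ := this
    refine ⟨(coeff (Finsupp.single i 1 + Finsupp.single j 1) f) • q i j,
      Submodule.smul_mem _ _ (Submodule.subset_span ⟨(i, j), rfl⟩), ?_⟩
    simp [q, mulW, xv, X, monomial_mul, smul_monomial]
  rw [eq_top_iff]
  rintro ⟨f, hf⟩ -
  obtain ⟨g, hg, hgf⟩ := key f hf
  have : g = ⟨f, hf⟩ := Subtype.ext hgf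
  rwa [← this]

def xx0 (i : Fin n) : KK k n := (X i : S k n) ⊗ₜ[k] (1 : ExteriorAlgebra k (S2 k n))
def yy0 (i j : Fin n) : KK k n := (1 : S k n) ⊗ₜ[k] ExteriorAlgebra.ι k (q i j : S2 k n)

def PP0 (i : Fin n) : KK k n →ₗ[k] KK k n :=
  LinearMap.rTensor _ (pderiv i : Derivation k (S k n) (S k n)).toLinearMap

def cc (i j : Fin n) : Module.Dual k (S2 k n) :=
  (aeval (fun _ => (0:k)) : S k n →ₐ[k] k).toLinearMap ∘ₗ
    (pderiv i : Derivation k (S k n) (S k n)).toLinearMap ∘ₗ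
    (pderiv j : Derivation k (S k n) (S k n)).toLinearMap ∘ₗ (S2 k n).subtype

def CC0 (i j : Fin n) : KK k n →ₗ[k] KK k n :=
  LinearMap.lTensor _ (CliffordAlgebra.contractLeft (Q := (0 : QuadraticForm k (S2 k n))) (cc i j))

/-- Kronecker delta. -/
def dl {m : ℕ} (i j : Fin m) : k := if i = j then 1 else 0

lemma pderiv_comm' (i j : Fin n) (f : S k n) : pderiv i (pderiv j f) = pderiv j (pderiv i f) := by
  have : ⁅(pderiv i : Derivation k (S k n) (S k n)), (pderiv j : Derivation k (S k n) (S k n))⁆ = 0 := by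
    apply MvPolynomial.derivation_ext
    intro l
    simp [Derivation.commutator_apply, pderiv_X, Pi.single_apply]
    split_ifs <;> simp
  have h := congrArg (fun D => D f) this
  simpa [Derivation.commutator_apply, sub_eq_zero] using h

lemma pderiv_X' (j a : Fin n) : pderiv j (X a : S k n) = C (dl j a) := by
  by_cases h : j = a
  · simp [h, dl]
  · simp [h, dl, pderiv_X_of_ne (Ne.symm h)]

lemma cc_q (i j a b : Fin n) : (cc i j) (q a b : S2 k n) = dl i a * dl j b + dl i b * dl j a := by
  simp [-pderiv_X, cc, q, mulW, xv, pderiv_X']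
  ring

lemma cc_symm (i j : Fin n) : (cc i j : Module.Dual k (S2 k n)) = cc j i := by
  ext f
  simp [cc, pderiv_comm' i j]

lemma yy_symm0 (i j : Fin n) : (yy0 i j : KK k n) = yy0 j i := by
  have : (q i j : S2 k n) = q j i := by
    apply Subtype.ext; simp [q, mulW, xv, mul_comm]
  simp [yy0, this]

lemma CC_symm0 (i j : Fin n) : (CC0 i j : KK k n →ₗ[k] KK k n) = CC0 j i := by
  simp [CC0, cc_symm i j]

theorem KK_ind0 {p : KK k n → Prop} (h1 : p 1) (hadd : ∀ u v, p u → p v → p (u + v))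
    (hsmul : ∀ (c : k) u, p u → p (c • u)) (hx : ∀ i u, p u → p (xx0 i * u))
    (hy : ∀ i j u, p u → p (yy0 i j * u)) (u : KK k n) : p u := by
  have h0 : p 0 := by simpa using hsmul 0 1 h1
  -- left multiplication by any `1 ⊗ ω`
  have hq : ∀ (m : S2 k n) (u : KK k n), p u → p ((1 : S k n) ⊗ₜ[k] ExteriorAlgebra.ι k m * u) := by
    intro m u hu
    have hm : m ∈ Submodule.span k (Set.range (fun p : Fin n × Fin n => (q p.1 p.2 : S2 k n))) := by
      rw [span_q]; trivial
    induction hm using Submodule.span_induction with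
    | mem x hx' =>
      obtain ⟨⟨i, j⟩, rfl⟩ := hx'
      exact hy i j u hu
    | zero => simpa using h0
    | add a b _ _ ha hb =>
      simp only [map_add, TensorProduct.tmul_add, add_mul]
      exact hadd _ _ ha hb
    | smul c a _ ha =>
      simp only [map_smul, TensorProduct.tmul_smul, smul_mul_assoc]
      exact hsmul _ _ ha
  have hL : ∀ (w : ExteriorAlgebra k (S2 k n)) (u : KK k n), p u → p ((1 : S k n) ⊗ₜ[k] w * u) := by
    intro w
    induction w using ExteriorAlgebra.induction with
    | algebraMap r =>
      intro u hu
      have : (1 : S k n) ⊗ₜ[k] (algebraMap k (ExteriorAlgebra k (S2 k n)) r) * u = r • u := by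
        rw [Algebra.algebraMap_eq_smul_one, TensorProduct.tmul_smul, smul_mul_assoc]
        rw [← Algebra.TensorProduct.one_def, one_mul]
      rw [this]; exact hsmul _ _ hu
    | ι m => exact hq m
    | mul a b ha hb =>
      intro u hu
      have : (1 : S k n) ⊗ₜ[k] (a * b) * u = (1 : S k n) ⊗ₜ[k] a * ((1 : S k n) ⊗ₜ[k] b * u) := by
        rw [← mul_assoc, Algebra.TensorProduct.tmul_mul_tmul, one_mul]
      rw [this]; exact ha _ (hb _ hu)
    | add a b ha hb =>
      intro u hu
      rw [TensorProduct.tmul_add, add_mul]; exact hadd _ _ (ha _ hu) (hb _ hu)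
  have hS : ∀ (f : S k n) (u : KK k n), p u → p (f ⊗ₜ[k] (1 : ExteriorAlgebra k (S2 k n)) * u) := by
    intro f
    induction f using MvPolynomial.induction_on with
    | C r =>
      intro u hu
      have : (C r : S k n) ⊗ₜ[k] (1 : ExteriorAlgebra k (S2 k n)) * u = r • u := by
        rw [show (C r : S k n) = r • 1 by rw [smul_eq_C_mul, mul_one], ← TensorProduct.smul_tmul', smul_mul_assoc]
        rw [← Algebra.TensorProduct.one_def, one_mul]
      rw [this]; exact hsmul _ _ hu
    | add a b ha hb =>
      intro u hu
      rw [TensorProduct.add_tmul, add_mul]; exact hadd _ _ (ha _ hu) (hb _ hu)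
    | mul_X f i hf =>
      intro u hu
      have : (f * X i) ⊗ₜ[k] (1 : ExteriorAlgebra k (S2 k n)) * u = f ⊗ₜ[k] 1 * (xx0 i * u) := by
        rw [xx0, ← mul_assoc, Algebra.TensorProduct.tmul_mul_tmul, one_mul]
      rw [this]; exact hf _ (hx _ _ hu)
  induction u using TensorProduct.induction_on with
  | zero => exact h0
  | add a b ha hb => exact hadd _ _ ha hb
  | tmul f w =>
    have : f ⊗ₜ[k] w = f ⊗ₜ[k] (1 : ExteriorAlgebra k (S2 k n)) * ((1 : S k n) ⊗ₜ[k] w * 1) := by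
      rw [mul_one, Algebra.TensorProduct.tmul_mul_tmul, one_mul, mul_one]
    rw [this]; exact hS _ _ (hL _ _ h1)

lemma xx_comm0 (i j : Fin n) : (xx0 i : KK k n) * xx0 j = xx0 j * xx0 i := by
  simp [xx0, mul_comm]
lemma xx_yy0 (i a b : Fin n) : (yy0 a b : KK k n) * xx0 i = xx0 i * yy0 a b := by
  simp [xx0, yy0]
lemma yy_yy0 (i j a b : Fin n) : (yy0 a b : KK k n) * yy0 i j = - (yy0 i j * yy0 a b) := by
  simp only [yy0, Algebra.TensorProduct.tmul_mul_tmul, one_mul]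
  rw [← TensorProduct.tmul_neg]
  congr 1
  exact eq_neg_of_add_eq_zero_left (ExteriorAlgebra.ι_add_mul_swap _ _)
lemma yy_sq0 (a b : Fin n) : (yy0 a b : KK k n) * yy0 a b = 0 := by
  simp [yy0]

lemma PP_one0 (i : Fin n) : PP0 i (1 : KK k n) = 0 := by
  simp [PP0, Algebra.TensorProduct.one_def]
lemma CC_one0 (i j : Fin n) : CC0 i j (1 : KK k n) = 0 := by
  simp [CC0, Algebra.TensorProduct.one_def]

lemma ext_tmul {V : Type} [AddCommGroup V] [Module k V] {f g : KK k n →ₗ[k] V}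
    (h : ∀ a w, f (a ⊗ₜ w) = g (a ⊗ₜ w)) (u : KK k n) : f u = g u := by
  have : f = g := TensorProduct.ext' h
  rw [this]

lemma PP_xx0 (i j : Fin n) (u : KK k n) : PP0 i (xx0 j * u) = (dl i j : k) • u + xx0 j * PP0 i u := by
  refine ext_tmul (f := PP0 i ∘ₗ LinearMap.mulLeft k (xx0 j))
    (g := (dl i j : k) • LinearMap.id + LinearMap.mulLeft k (xx0 j) ∘ₗ PP0 i) (fun a w => ?_) u
  simp [PP0, xx0, pderiv_X, Pi.single_apply, dl]
  by_cases h : i = j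
  · simp [h, TensorProduct.add_tmul, add_comm]
  · simp [h, Ne.symm h]
lemma PP_yy0 (i a b : Fin n) (u : KK k n) : PP0 i (yy0 a b * u) = yy0 a b * PP0 i u := by
  refine ext_tmul (f := PP0 i ∘ₗ LinearMap.mulLeft k (yy0 a b))
    (g := LinearMap.mulLeft k (yy0 a b) ∘ₗ PP0 i) (fun a w => ?_) u
  simp [PP0, yy0]
lemma CC_xx0 (i j a : Fin n) (u : KK k n) : CC0 i j (xx0 a * u) = xx0 a * CC0 i j u := by
  refine ext_tmul (f := CC0 i j ∘ₗ LinearMap.mulLeft k (xx0 a))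
    (g := LinearMap.mulLeft k (xx0 a) ∘ₗ CC0 i j) (fun a w => ?_) u
  simp [CC0, xx0]
lemma CC_yy0 (i j a b : Fin n) (u : KK k n) :
    CC0 i j (yy0 a b * u) = (dl i a * dl j b + dl i b * dl j a : k) • u - yy0 a b * CC0 i j u := by
  refine ext_tmul (f := CC0 i j ∘ₗ LinearMap.mulLeft k (yy0 a b))
    (g := (dl i a * dl j b + dl i b * dl j a : k) • LinearMap.id -
      LinearMap.mulLeft k (yy0 a b) ∘ₗ CC0 i j) (fun f w => ?_) u
  simp only [CC0, yy0, LinearMap.comp_apply, LinearMap.mulLeft_apply,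
    Algebra.TensorProduct.tmul_mul_tmul, one_mul, LinearMap.lTensor_tmul, LinearMap.sub_apply,
    LinearMap.smul_apply, LinearMap.id_apply]
  rw [show (ExteriorAlgebra.ι k (q a b : S2 k n)) = CliffordAlgebra.ι (0 : QuadraticForm k (S2 k n)) (q a b) from rfl,
    CliffordAlgebra.contractLeft_ι_mul, cc_q, TensorProduct.tmul_sub, TensorProduct.tmul_smul]
lemma PP_PP0 (i j : Fin n) (u : KK k n) : PP0 i (PP0 j u) = PP0 j (PP0 i u) := by
  refine ext_tmul (f := PP0 i ∘ₗ PP0 j) (g := PP0 j ∘ₗ PP0 i) (fun a w => ?_) u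
  simp [PP0, pderiv_comm' i j]
lemma PP_CC0 (i a b : Fin n) (u : KK k n) : CC0 a b (PP0 i u) = PP0 i (CC0 a b u) := by
  refine ext_tmul (f := CC0 a b ∘ₗ PP0 i) (g := PP0 i ∘ₗ CC0 a b) (fun a w => ?_) u
  simp [PP0, CC0]
lemma CC_CC0 (i j a b : Fin n) (u : KK k n) : CC0 a b (CC0 i j u) = - CC0 i j (CC0 a b u) := by
  refine ext_tmul (f := CC0 a b ∘ₗ CC0 i j) (g := - (CC0 i j ∘ₗ CC0 a b)) (fun f w => ?_) u
  simp only [CC0, LinearMap.comp_apply, LinearMap.lTensor_tmul, LinearMap.neg_apply]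
  rw [CliffordAlgebra.contractLeft_comm, TensorProduct.tmul_neg]
lemma CC_sq0 (a b : Fin n) (u : KK k n) : CC0 a b (CC0 a b u) = 0 := by
  refine ext_tmul (f := CC0 a b ∘ₗ CC0 a b) (g := 0) (fun f w => ?_) u
  simp [CC0, CliffordAlgebra.contractLeft_contractLeft]

lemma xx_inj0 (i : Fin n) (u : KK k n) (h : xx0 i * u = 0) : u = 0 := by
  have hinj : Function.Injective (LinearMap.rTensor (ExteriorAlgebra k (S2 k n))
      (LinearMap.mulLeft k (X i : S k n))) := by
    apply Module.Flat.rTensor_preserves_injective_linearMap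
    intro a b hab
    exact mul_left_cancel₀ (X_ne_zero i) hab
  have h2 : LinearMap.rTensor (ExteriorAlgebra k (S2 k n)) (LinearMap.mulLeft k (X i : S k n)) u
      = xx0 i * u := by
    refine ext_tmul (g := LinearMap.mulLeft k (xx0 i)) (fun a w => ?_) u
    simp [xx0]
  apply hinj
  rw [h2, h, map_zero]

variable (k n) in
/-- The Koszul algebra with only its ring and algebra instances. -/
def KR : Type := KK k n

instance : Ring (KR k n) := inferInstanceAs (Ring (KK k n))
instance : Algebra k (KR k n) := inferInstanceAs (Algebra k (KK k n))

def xx (i : Fin n) : KR k n := (xx0 i : KK k n)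
def yy (i j : Fin n) : KR k n := (yy0 i j : KK k n)
def PP (i : Fin n) : KR k n →ₗ[k] KR k n := (PP0 i : KK k n →ₗ[k] KK k n)
def CC (i j : Fin n) : KR k n →ₗ[k] KR k n := (CC0 i j : KK k n →ₗ[k] KK k n)

theorem KR_ind {p : KR k n → Prop} (h1 : p 1) (hadd : ∀ u v, p u → p v → p (u + v))
    (hsmul : ∀ (c : k) u, p u → p (c • u)) (hx : ∀ i u, p u → p (xx i * u))
    (hy : ∀ i j u, p u → p (yy i j * u)) (u : KR k n) : p u :=
  KK_ind0 (p := p) h1 hadd hsmul hx hy u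
lemma yy_symm (i j : Fin n) : (yy i j : KR k n) = yy j i := yy_symm0 i j
lemma CC_symm (i j : Fin n) : (CC i j : KR k n →ₗ[k] KR k n) = CC j i := CC_symm0 i j
lemma xx_comm (i j : Fin n) : (xx i : KR k n) * xx j = xx j * xx i := xx_comm0 i j
lemma xx_yy (i a b : Fin n) : (yy a b : KR k n) * xx i = xx i * yy a b := xx_yy0 i a b
lemma yy_yy (i j a b : Fin n) : (yy a b : KR k n) * yy i j = - (yy i j * yy a b) := yy_yy0 i j a b
lemma yy_sq (a b : Fin n) : (yy a b : KR k n) * yy a b = 0 := yy_sq0 a b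
lemma PP_one (i : Fin n) : PP i (1 : KR k n) = 0 := PP_one0 i
lemma CC_one (i j : Fin n) : CC i j (1 : KR k n) = 0 := CC_one0 i j
lemma PP_xx (i j : Fin n) (u : KR k n) : PP i (xx j * u) = (dl i j : k) • u + xx j * PP i u :=
  PP_xx0 i j u
lemma PP_yy (i a b : Fin n) (u : KR k n) : PP i (yy a b * u) = yy a b * PP i u := PP_yy0 i a b u
lemma CC_xx (i j a : Fin n) (u : KR k n) : CC i j (xx a * u) = xx a * CC i j u := CC_xx0 i j a u
lemma CC_yy (i j a b : Fin n) (u : KR k n) :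
    CC i j (yy a b * u) = (dl i a * dl j b + dl i b * dl j a : k) • u - yy a b * CC i j u :=
  CC_yy0 i j a b u
lemma PP_PP (i j : Fin n) (u : KR k n) : PP i (PP j u) = PP j (PP i u) := PP_PP0 i j u
lemma PP_CC (i a b : Fin n) (u : KR k n) : CC a b (PP i u) = PP i (CC a b u) := PP_CC0 i a b u
lemma CC_CC (i j a b : Fin n) (u : KR k n) : CC a b (CC i j u) = - CC i j (CC a b u) :=
  CC_CC0 i j a b u
lemma CC_sq (a b : Fin n) (u : KR k n) : CC a b (CC a b u) = 0 := CC_sq0 a b u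
lemma xx_inj (i : Fin n) (u : KR k n) (h : xx i * u = 0) : u = 0 := xx_inj0 i u h

lemma dl_smul_sum {m : ℕ} {V : Type} [AddCommGroup V] [Module k V] (i : Fin m) (f : Fin m → V) :
    ∑ j, (dl i j : k) • f j = f i := by
  simp [dl]
lemma dl_smul_sum' {m : ℕ} {V : Type} [AddCommGroup V] [Module k V] (i : Fin m) (f : Fin m → V) :
    ∑ j, (dl j i : k) • f j = f i := by
  simp [dl]
lemma dl_symm {m : ℕ} (i j : Fin m) : (dl i j : k) = dl j i := by
  simp [dl, eq_comm]
lemma dl_self {m : ℕ} (i : Fin m) : (dl i i : k) = 1 := by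
  simp [dl]
lemma dl_ne {m : ℕ} {i j : Fin m} (h : i ≠ j) : (dl i j : k) = 0 := by
  simp [dl, h]

def dK : KR k n →ₗ[k] KR k n :=
  (2⁻¹ : k) • ∑ i, ∑ j, LinearMap.mulLeft k (xx i) ∘ₗ LinearMap.mulLeft k (xx j) ∘ₗ CC i j

lemma dK_apply (u : KR k n) : dK u = (2⁻¹ : k) • ∑ i, ∑ j, xx i * (xx j * CC i j u) := by
  simp [dK, LinearMap.sum_apply]

def ee (p r : Fin n) : KR k n →ₗ[k] KR k n :=
  LinearMap.mulLeft k (xx p) ∘ₗ PP r + ∑ s, LinearMap.mulLeft k (yy p s) ∘ₗ CC r s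

lemma ee_apply (p r : Fin n) (u : KR k n) :
    ee p r u = xx p * PP r u + ∑ s, yy p s * CC r s u := by
  simp [ee, LinearMap.sum_apply]

def del : KR k n →ₗ[k] KR k n :=
  (2⁻¹ : k) • ∑ i, ∑ j, LinearMap.mulLeft k (yy i j) ∘ₗ PP i ∘ₗ PP j

lemma del_apply (u : KR k n) : del u = (2⁻¹ : k) • ∑ i, ∑ j, yy i j * PP i (PP j u) := by
  simp [del, LinearMap.sum_apply]

lemma xx_lc (i j : Fin n) (u : KR k n) : xx i * (xx j * u) = xx j * (xx i * u) := by
  rw [← mul_assoc, xx_comm, mul_assoc]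
lemma yx_lc (i a b : Fin n) (u : KR k n) : yy a b * (xx i * u) = xx i * (yy a b * u) := by
  rw [← mul_assoc, xx_yy, mul_assoc]
lemma yy_lc (i j a b : Fin n) (u : KR k n) : yy a b * (yy i j * u) = -(yy i j * (yy a b * u)) := by
  rw [← mul_assoc, yy_yy, neg_mul, mul_assoc]
lemma yy_lsq (a b : Fin n) (u : KR k n) : yy a b * (yy a b * u) = 0 := by
  rw [← mul_assoc, yy_sq, zero_mul]

lemma dK_one : dK (1 : KR k n) = 0 := by simp [dK_apply, CC_one]
lemma dK_xx (i : Fin n) (u : KR k n) : dK (xx i * u) = xx i * dK u := by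
  simp only [dK_apply, CC_xx, mul_smul_comm, Finset.mul_sum]
  simp only [xx_lc i]
lemma dK_yy [CharZero k] (a b : Fin n) (u : KR k n) :
    dK (yy a b * u) = xx a * (xx b * u) - yy a b * dK u := by
  simp only [dK_apply, CC_yy, mul_sub, Finset.sum_sub_distrib, smul_sub, mul_smul_comm,
    Finset.mul_sum, yx_lc]
  congr 1
  simp only [add_smul, Finset.sum_add_distrib, mul_smul, mul_add, mul_smul_comm,
    ← Finset.smul_sum, dl_smul_sum']
  rw [xx_lc b a, ← two_smul k, smul_smul]
  norm_num
lemma dK_CC (a b : Fin n) (u : KR k n) : dK (CC a b u) = - CC a b (dK u) := by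
  simp only [dK_apply, map_smul, map_sum, CC_xx]
  have h : ∀ i j, CC a b (CC i j u) = -CC i j (CC a b u) := fun i j => CC_CC i j a b u
  simp only [h, mul_neg, Finset.sum_neg_distrib, smul_neg, neg_neg]
lemma PP_dK [CharZero k] (p : Fin n) (u : KR k n) :
    PP p (dK u) = dK (PP p u) + ∑ j, xx j * CC p j u := by
  simp only [dK_apply, map_smul, map_sum, PP_xx, mul_add, Finset.sum_add_distrib, smul_add,
    mul_smul_comm, PP_CC]
  rw [add_comm, add_assoc, add_comm]
  simp only [← Finset.smul_sum, dl_smul_sum]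
  rw [add_assoc]
  congr 1
  have h : ∀ x, CC x p u = CC p x u := fun x => by rw [CC_symm]
  simp only [h]
  rw [← smul_add, ← two_smul k, smul_smul]
  norm_num
lemma dK_dK [CharZero k] (u : KR k n) : dK (dK u) = 0 := by
  induction u using KR_ind with
  | h1 => simp [dK_one]
  | hadd u v hu hv => simp [hu, hv]
  | hsmul c u hu => simp [hu]
  | hx i u hu => simp [dK_xx, hu]
  | hy i j u hu => simp [dK_yy, dK_xx, hu]

lemma ee_one (p r : Fin n) : ee p r (1 : KR k n) = 0 := by
  simp [ee_apply, PP_one, CC_one]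
lemma ee_xx (p r a : Fin n) (u : KR k n) :
    ee p r (xx a * u) = (dl r a : k) • (xx p * u) + xx a * ee p r u := by
  simp only [ee_apply, PP_xx, CC_xx, mul_add, mul_smul_comm, Finset.mul_sum, yx_lc]
  rw [xx_lc p a, add_assoc]
lemma ee_yy (p r a b : Fin n) (u : KR k n) :
    ee p r (yy a b * u) = (dl r a : k) • (yy p b * u) + (dl r b : k) • (yy p a * u)
      + yy a b * ee p r u := by
  simp only [ee_apply, PP_yy, CC_yy, mul_add, mul_sub, mul_smul_comm, Finset.mul_sum, yx_lc,
    Finset.sum_sub_distrib, add_smul, Finset.sum_add_distrib, mul_smul, ← Finset.smul_sum,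
    dl_smul_sum']
  have h : ∀ s, yy p s * (yy a b * CC r s u) = -(yy a b * (yy p s * CC r s u)) :=
    fun s => yy_lc _ _ _ _ _
  simp only [h, Finset.sum_neg_distrib]
  abel

lemma ee_dK [CharZero k] (p r : Fin n) (u : KR k n) : ee p r (dK u) = dK (ee p r u) := by
  induction u using KR_ind with
  | h1 => simp [dK_one, ee_one]
  | hadd u v hu hv => simp [hu, hv]
  | hsmul c u hu => simp [hu]
  | hx i u hu => simp [dK_xx, ee_xx, hu]
  | hy i j u hu =>
    simp only [dK_yy, ee_xx, ee_yy, hu, map_sub, map_add, map_smul, mul_add, mul_smul_comm,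
      smul_sub]
    rw [xx_lc i p]
    abel



lemma ee_comm (p r s t : Fin n) (u : KR k n) :
    ee p r (ee s t u) = ee s t (ee p r u) + (dl r s : k) • ee p t u - (dl t p : k) • ee s r u := by
  induction u using KR_ind with
  | h1 => simp [ee_one]
  | hadd u v hu hv => simp only [map_add, hu, hv]; module
  | hsmul c u hu => simp only [map_smul, hu]; module
  | hx i u hu =>
    simp only [ee_xx, map_add, map_smul, hu, mul_add, mul_sub, mul_smul_comm]; module
  | hy i j u hu =>
    simp only [ee_yy, map_add, map_smul, hu, mul_add, mul_sub, mul_smul_comm, yy_symm s p]; module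

lemma ee_PP (i j : Fin n) (u : KR k n) :
    ee i i (PP j u) = PP j (ee i i u) - (dl j i : k) • PP j u := by
  simp only [ee_apply, map_add, map_sum, PP_xx, PP_yy, PP_CC, PP_PP i j]
  by_cases h : j = i
  · subst h; simp only [dl_self]; module
  · simp only [dl_ne h]; module

lemma ee_CC (i a b : Fin n) (u : KR k n) :
    ee i i (CC a b u) = CC a b (ee i i u) - (dl i a + dl i b : k) • CC a b u := by
  have h : ∀ s, yy i s * CC i s (CC a b u) = -(yy i s * CC a b (CC i s u)) := fun s => by
    rw [CC_CC]; simp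
  simp only [ee_apply, map_add, map_sum, CC_xx, CC_yy, PP_CC, Finset.sum_sub_distrib, add_smul,
    Finset.sum_add_distrib, mul_smul, ← Finset.smul_sum, dl_smul_sum, h, Finset.sum_neg_distrib]
  by_cases h : a = i
  · subst h
    by_cases h' : b = a
    · subst h'; simp only [dl_self]; module
    · simp only [dl_self, dl_ne h', dl_ne (Ne.symm h')]; module
  · by_cases h' : b = i
    · subst h'; simp only [dl_self, dl_ne h, dl_ne (Ne.symm h), CC_symm b a]; module
    · simp only [dl_ne h, dl_ne (Ne.symm h), dl_ne h', dl_ne (Ne.symm h')]; module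

lemma lapl1 [CharZero k] (u : KR k n) :
    (2:k) • (dK (del u) + del (dK u)) = ∑ p, ∑ r, xx p * (xx r * PP p (PP r u))
      + ∑ p, ∑ r, yy p r * CC p r u
      + (2:k) • ∑ p, ∑ r, ∑ j, yy p r * (xx j * CC r j (PP p u)) := by
  have h1 : (2:k) • dK (del u) = ∑ p, ∑ r, xx p * (xx r * PP p (PP r u)) -
      ∑ p, ∑ r, yy p r * dK (PP p (PP r u)) := by
    rw [del_apply, map_smul, smul_smul, mul_inv_cancel₀ two_ne_zero, one_smul]
    simp only [map_sum, dK_yy, Finset.sum_sub_distrib]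
  have h2 : (2:k) • del (dK u) = ∑ p, ∑ r, yy p r * dK (PP p (PP r u))
      + ∑ p, ∑ r, yy p r * CC p r u
      + ∑ p, ∑ r, ∑ j, yy p r * (xx j * CC p j (PP r u))
      + ∑ p, ∑ r, ∑ j, yy p r * (xx j * CC r j (PP p u)) := by
    rw [del_apply, smul_smul, mul_inv_cancel₀ two_ne_zero, one_smul]
    have h : ∀ r p, CC r p u = CC p r u := fun r p => by rw [CC_symm]
    simp only [PP_dK, map_add, map_sum, PP_xx, mul_add, Finset.mul_sum, Finset.sum_add_distrib,
      dl_smul_sum, mul_smul_comm, PP_CC, h]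
    abel
  have h3 : ∑ p, ∑ r, ∑ j, yy p r * (xx j * CC p j (PP r u)) =
      ∑ p, ∑ r, ∑ j, yy p r * (xx j * CC r j (PP p u)) := by
    rw [Finset.sum_comm]
    refine Finset.sum_congr rfl fun p _ => Finset.sum_congr rfl fun r _ => ?_
    rw [yy_symm r p]
  rw [smul_add, h1, h2, h3, two_smul]
  abel

lemma sum_swap4 {V : Type} [AddCommMonoid V] (f : Fin n → Fin n → Fin n → Fin n → V) :
    ∑ p, ∑ r, ∑ s, ∑ t, f p r s t = ∑ p, ∑ r, ∑ s, ∑ t, f s t p r := by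
  have h : ∀ g : Fin n → Fin n → Fin n → Fin n → V, ∑ p, ∑ r, ∑ s, ∑ t, g p r s t =
      ∑ x : Fin n × Fin n, ∑ y : Fin n × Fin n, g x.1 x.2 y.1 y.2 := by
    intro g
    simp only [Fintype.sum_prod_type]
  rw [h, h]
  exact Finset.sum_comm

lemma lapl2 [CharZero k] (u : KR k n) :
    ∑ p, ∑ r, ee p r (ee r p u) - (n:k) • ∑ p, ee p p u
    = ∑ p, ∑ r, xx p * (xx r * PP p (PP r u))
      + ∑ p, ∑ r, yy p r * CC p r u
      + (2:k) • ∑ p, ∑ r, ∑ j, yy p r * (xx j * CC r j (PP p u)) := by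
  have hT : ∑ p, ∑ r, ∑ t, ∑ s, yy r t * (yy p s * CC r s (CC p t u)) = 0 := by
    have : ∑ p, ∑ r, ∑ t, ∑ s, yy r t * (yy p s * CC r s (CC p t u)) =
       - ∑ p, ∑ r, ∑ t, ∑ s, yy r t * (yy p s * CC r s (CC p t u)) := by
      simp only [← Finset.sum_neg_distrib]
      refine (Finset.sum_congr rfl fun p _ => Finset.sum_congr rfl fun r _ => Finset.sum_comm).trans ?_
      rw [sum_swap4]
      refine Finset.sum_congr rfl fun p _ => Finset.sum_congr rfl fun r _ => ?_
      rw [Finset.sum_comm]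
      refine Finset.sum_congr rfl fun s _ => Finset.sum_congr rfl fun t _ => ?_
      rw [yy_symm t p, yy_symm s r, CC_symm s p, CC_symm t r, CC_CC, mul_neg, mul_neg]
    have h2 : (2:k) • (∑ p, ∑ r, ∑ t, ∑ s, yy r t * (yy p s * CC r s (CC p t u))) = 0 := by
      rw [two_smul]; nth_rewrite 1 [this]; simp
    exact (smul_eq_zero.1 h2).resolve_left two_ne_zero
  have e1 : ∀ p r, ee p r (ee r p u) = xx p * PP p u + xx p * (xx r * PP p (PP r u))
      + ∑ t, yy r t * (xx p * CC p t (PP r u))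
      + ∑ s, yy p s * (xx r * CC r s (PP p u))
      + (∑ s, yy p s * CC p s u + yy p r * CC p r u)
      + ∑ t, ∑ s, yy r t * (yy p s * CC r s (CC p t u)) := by
    intro p r
    rw [ee_apply r p u]
    simp only [map_add, map_sum, ee_xx, ee_yy, dl_self, one_smul, Finset.sum_add_distrib,
      dl_smul_sum]
    simp only [ee_apply, mul_add, Finset.mul_sum, Finset.sum_add_distrib, PP_CC, yx_lc, xx_lc r p,
      PP_PP r p]
    abel
  have hG : ∑ p, ∑ r, ∑ t, yy r t * (xx p * CC p t (PP r u)) =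
      ∑ p, ∑ r, ∑ j, yy p r * (xx j * CC r j (PP p u)) := by
    rw [Finset.sum_comm]
    refine Finset.sum_congr rfl fun p _ => ?_
    rw [Finset.sum_comm]
    refine Finset.sum_congr rfl fun r _ => Finset.sum_congr rfl fun j _ => ?_
    rw [CC_symm j r]
  have hG2 : ∑ p, ∑ r, ∑ s, yy p s * (xx r * CC r s (PP p u)) =
      ∑ p, ∑ r, ∑ j, yy p r * (xx j * CC r j (PP p u)) := by
    refine Finset.sum_congr rfl fun p _ => ?_
    rw [Finset.sum_comm]
    refine Finset.sum_congr rfl fun r _ => Finset.sum_congr rfl fun j _ => ?_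
    rw [CC_symm j r]
  simp only [e1, Finset.sum_add_distrib, hT, hG, hG2]
  simp only [ee_apply, Finset.sum_const, Finset.card_univ, Fintype.card_fin,
    Finset.sum_add_distrib, ← Nat.cast_smul_eq_nsmul k, ← Finset.smul_sum]
  module

lemma lapl [CharZero k] (u : KR k n) :
    (2:k) • (dK (del u) + del (dK u)) =
      ∑ p, ∑ r, ee p r (ee r p u) - (n:k) • ∑ p, ee p p u := by
  rw [lapl1, lapl2]

def Wt (l : Fin n → ℤ) : Submodule k (KR k n) where
  carrier := {u | ∀ i, ee i i u = (l i : k) • u}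
  add_mem' := by
    intro a b ha hb i
    simp only [Set.mem_ofPred_eq] at ha hb
    rw [map_add, ha i, hb i, smul_add]
  zero_mem' := by intro i; simp
  smul_mem' := by
    intro c a ha i
    simp only [Set.mem_ofPred_eq] at ha
    rw [map_smul, ha i, smul_comm]

lemma mem_Wt {l : Fin n → ℤ} {u : KR k n} : u ∈ Wt l ↔ ∀ i, ee i i u = (l i : k) • u := Iff.rfl

def Ct (l : Fin n → ℤ) : ℤ := ∑ p : Fin n, l p * (l p - 2 * (p : ℕ) - 1)

/-- unit weight -/
def ep (i : Fin n) : Fin n → ℤ := fun j => if j = i then 1 else 0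

lemma ep_cast (i j : Fin n) : ((ep i j : ℤ) : k) = dl j i := by
  simp only [ep, dl]; split_ifs <;> simp

lemma Wt_xx {l : Fin n → ℤ} {u : KR k n} (i : Fin n) (h : u ∈ Wt l) : xx i * u ∈ Wt (l + ep i) := by
  intro j
  rw [ee_xx, h j, Pi.add_apply, Int.cast_add, ep_cast, mul_smul_comm]
  by_cases hj : j = i
  · subst hj; simp only [dl_self]; module
  · simp only [dl_ne hj]; module

lemma Wt_yy {l : Fin n → ℤ} {u : KR k n} (i i' : Fin n) (h : u ∈ Wt l) :
    yy i i' * u ∈ Wt (l + ep i + ep i') := by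
  intro j
  rw [ee_yy, h j, Pi.add_apply, Pi.add_apply, Int.cast_add, Int.cast_add, ep_cast, ep_cast,
    mul_smul_comm]
  by_cases hj : j = i
  · subst hj
    by_cases hj' : j = i'
    · subst hj'; simp only [dl_self]; module
    · simp only [dl_ne hj', dl_self]; module
  · by_cases hj' : j = i'
    · subst hj'; simp only [dl_ne hj, dl_self, yy_symm i j]; module
    · simp only [dl_ne hj, dl_ne hj']; module

lemma Wt_PP {l : Fin n → ℤ} {u : KR k n} (i : Fin n) (h : u ∈ Wt l) : PP i u ∈ Wt (l - ep i) := by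
  intro j
  rw [ee_PP, h j, Pi.sub_apply, Int.cast_sub, ep_cast, map_smul, dl_symm]
  module
lemma Wt_CC {l : Fin n → ℤ} {u : KR k n} (i i' : Fin n) (h : u ∈ Wt l) :
    CC i i' u ∈ Wt (l - ep i - ep i') := by
  intro j
  rw [ee_CC, h j, Pi.sub_apply, Pi.sub_apply, Int.cast_sub, Int.cast_sub, ep_cast, ep_cast,
    map_smul]
  module
lemma Wt_dK [CharZero k] {l : Fin n → ℤ} {u : KR k n} (h : u ∈ Wt l) : dK u ∈ Wt l := by
  intro j
  rw [ee_dK, h j, map_smul]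
lemma Wt_ee {l : Fin n → ℤ} {u : KR k n} (p r : Fin n) (h : u ∈ Wt l) :
    ee p r u ∈ Wt (l + ep p - ep r) := by
  intro j
  rw [ee_comm, h j, Pi.sub_apply, Pi.add_apply, Int.cast_sub, Int.cast_add, ep_cast, ep_cast,
    map_smul, dl_symm r j]
  by_cases hj : j = p
  · subst hj
    by_cases hj' : j = r
    · subst hj'; simp only [dl_self]; module
    · simp only [dl_ne hj', dl_self]; module
  · by_cases hj' : j = r
    · subst hj'; simp only [dl_ne hj, dl_self]; module
    · simp only [dl_ne hj, dl_ne hj']; module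

open Classical in
lemma Wt_dec (u : KR k n) : ∃ f : (Fin n → ℤ) →₀ KR k n, (∀ μ, f μ ∈ Wt μ) ∧
    (∀ μ, f μ ≠ 0 → 0 ≤ μ) ∧ ∑ μ ∈ f.support, f μ = u := by
  set p : (Fin n → ℤ) → Submodule k (KR k n) := fun μ => if 0 ≤ μ then Wt μ else ⊥ with hp
  have key : u ∈ ⨆ μ, p μ := by
    induction u using KR_ind with
    | h1 =>
      refine Submodule.mem_iSup_of_mem 0 ?_
      simp only [hp, le_refl, if_true]
      intro i; simp [ee_one]
    | hadd u v hu hv => exact add_mem hu hv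
    | hsmul c u hu => exact Submodule.smul_mem _ _ hu
    | hx i u hu =>
      induction hu using Submodule.iSup_induction' with
      | mem μ x hx =>
        simp only [hp] at hx
        split_ifs at hx with h
        · refine Submodule.mem_iSup_of_mem (μ + ep i) ?_
          have : 0 ≤ μ + ep i := by
            intro j; have := h j; simp only [Pi.add_apply, Pi.zero_apply, ep] at *; split_ifs <;> omega
          simp only [hp, this, if_true]
          exact Wt_xx i hx
        · rw [(Submodule.mem_bot k).1 hx, mul_zero]; exact zero_mem _
      | zero => rw [mul_zero]; exact zero_mem _
      | add x y _ _ hx hy => rw [mul_add]; exact add_mem hx hy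
    | hy i j u hu =>
      induction hu using Submodule.iSup_induction' with
      | mem μ x hx =>
        simp only [hp] at hx
        split_ifs at hx with h
        · refine Submodule.mem_iSup_of_mem (μ + ep i + ep j) ?_
          have : 0 ≤ μ + ep i + ep j := by
            intro l; have := h l; simp only [Pi.add_apply, Pi.zero_apply, ep] at *
            split_ifs <;> omega
          simp only [hp, this, if_true]
          exact Wt_yy i j hx
        · rw [(Submodule.mem_bot k).1 hx, mul_zero]; exact zero_mem _
      | zero => rw [mul_zero]; exact zero_mem _
      | add x y _ _ hx hy => rw [mul_add]; exact add_mem hx hy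
  obtain ⟨f, hf, hs⟩ := (Submodule.mem_iSup_iff_exists_finsupp _ _).1 key
  refine ⟨f, fun μ => ?_, fun μ h0 => ?_, hs⟩
  · have := hf μ
    simp only [hp] at this
    split_ifs at this with h
    · exact this
    · rw [(Submodule.mem_bot k).1 this]; exact zero_mem _
  · have := hf μ
    simp only [hp] at this
    split_ifs at this with h
    · exact h
    · exact absurd ((Submodule.mem_bot k).1 this) h0

lemma Wt_comp [CharZero k] (Q : Submodule k (KR k n)) (hQ : ∀ i u, u ∈ Q → ee i i u ∈ Q)
    (F : Finset (Fin n → ℤ)) : ∀ (v : (Fin n → ℤ) → KR k n), (∀ μ ∈ F, v μ ∈ Wt μ) →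
    ∑ μ ∈ F, v μ ∈ Q → ∀ μ ∈ F, v μ ∈ Q := by
  classical
  induction F using Finset.induction_on with
  | empty => intro v _ _ μ h; simp at h
  | insert ν F hν ih =>
    intro v hv hs
    have h1 : ∀ μ ∈ F, v μ ∈ Q := by
      intro μ hμ
      have hne : μ ≠ ν := fun h => hν (h ▸ hμ)
      obtain ⟨i, hi⟩ := Function.ne_iff.1 hne
      have := ih (fun μ => ((μ i : k) - (ν i : k)) • v μ)
        (fun μ hμ => Submodule.smul_mem _ _ (hv μ (Finset.mem_insert_of_mem hμ))) ?_ μ hμ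
      · have h0 : ((μ i : k) - (ν i : k)) ≠ 0 := by
          rw [sub_ne_zero]; exact_mod_cast hi
        exact (Submodule.smul_mem_iff _ h0).1 this
      · have h2 := Q.sub_mem (hQ i _ hs) (Q.smul_mem (ν i : k) hs)
        rw [map_sum, Finset.smul_sum, ← Finset.sum_sub_distrib, Finset.sum_insert hν,
          hv ν (Finset.mem_insert_self _ _) i, sub_self, zero_add] at h2
        convert h2 using 1
        refine Finset.sum_congr rfl fun μ hμ => ?_
        rw [hv μ (Finset.mem_insert_of_mem hμ) i, sub_smul]
    intro μ hμ
    rcases Finset.mem_insert.1 hμ with rfl | h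
    · rw [Finset.sum_insert hν] at hs
      have h3 := Q.sub_mem hs (Q.sum_mem h1)
      rwa [add_sub_cancel_right] at h3
    · exact h1 μ h

lemma Wt_nonneg [CharZero k] {l : Fin n → ℤ} {u : KR k n} (h : u ∈ Wt l) (hu : u ≠ 0) : 0 ≤ l := by
  classical
  obtain ⟨f, hf, h0, hs⟩ := Wt_dec u
  by_contra hl
  have hfl : f l = 0 := by by_contra h'; exact hl (h0 l h')
  have hns : l ∉ f.support := by simpa using hfl
  have := Wt_comp (⊥ : Submodule k (KR k n)) (by intro i u hu; simp_all) (insert l f.support)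
    (fun μ => if μ = l then -u else f μ) ?_ ?_ l (Finset.mem_insert_self _ _)
  · simp at this; exact hu this
  · intro μ _
    split_ifs with h'
    · subst h'; exact neg_mem h
    · exact hf μ
  · rw [Finset.sum_insert hns]
    rw [Finset.sum_congr rfl (g := f)]
    · simp [hs]
    · intro μ hμ
      rw [if_neg]; rintro rfl; exact hns hμ

/-- component of a boundary relation -/
lemma Wt_bdry_comp [CharZero k] (Q : Submodule k (KR k n)) (hQ : ∀ i u, u ∈ Q → ee i i u ∈ Q)
    {l : Fin n → ℤ} {u w : KR k n} (h : u ∈ Wt l) (hw : u - dK w ∈ Q) :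
    ∃ w' ∈ Wt l, u - dK w' ∈ Q := by
  classical
  obtain ⟨f, hf, h0, hs⟩ := Wt_dec w
  have := Wt_comp Q hQ (insert l f.support)
    (fun μ => (if μ = l then u else 0) - dK (f μ)) ?_ ?_ l (Finset.mem_insert_self _ _)
  · refine ⟨f l, hf l, by simpa using this⟩
  · intro μ _
    refine sub_mem ?_ (Wt_dK (hf μ))
    split_ifs with h'
    · subst h'; exact h
    · exact zero_mem _
  · rw [Finset.sum_sub_distrib, ← map_sum]
    have : ∑ μ ∈ insert l f.support, f μ = w := by
      rw [← hs]
      symm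
      apply Finset.sum_subset (Finset.subset_insert _ _)
      intro x _ hx; simpa using hx
    rw [this]
    simpa using hw

/-- bad weights -/
def Bad (Q : Submodule k (KR k n)) (l : Fin n → ℤ) : Prop := ∃ c ∈ Wt l, dK c = 0 ∧ c ∉ Q

lemma exists_bad [CharZero k] (Q : Submodule k (KR k n)) (c : KR k n) (hc : dK c = 0)
    (hQ : c ∉ Q) : ∃ l, Bad Q l := by
  obtain ⟨f, hf, h0, hs⟩ := Wt_dec c
  by_contra hb
  apply hQ
  rw [← hs]
  refine Q.sum_mem fun μ hμ => ?_
  by_contra h'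
  refine hb ⟨μ, f μ, hf μ, ?_, h'⟩
  have := Wt_comp (LinearMap.ker (dK : KR k n →ₗ[k] KR k n)) ?_ f.support f (fun μ _ => hf μ) ?_ μ hμ
  · simpa using this
  · intro i u hu
    rw [LinearMap.mem_ker] at *
    rw [← ee_dK, hu, map_zero]
  · rw [hs]; exact hc

lemma Bad.nonneg [CharZero k] {Q : Submodule k (KR k n)} {l : Fin n → ℤ} (h : Bad Q l) : 0 ≤ l := by
  obtain ⟨c, hc, _, hq⟩ := h
  exact Wt_nonneg hc (fun h => hq (h ▸ zero_mem _))

lemma sum_two {f g : Fin n → ℤ} {i j : Fin n} (hij : i ≠ j) (h : ∀ p, p ≠ i → p ≠ j → f p = g p) :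
    ∑ p, f p = ∑ p, g p + (f i - g i) + (f j - g j) := by
  have h1 : ∑ p, (f p - g p) = ∑ p ∈ ({i, j} : Finset (Fin n)), (f p - g p) := by
    symm
    apply Finset.sum_subset (Finset.subset_univ _)
    intro p _ hp
    simp only [Finset.mem_insert, Finset.mem_singleton, not_or] at hp
    rw [h p hp.1 hp.2, sub_self]
  rw [Finset.sum_pair hij, Finset.sum_sub_distrib] at h1
  linarith

lemma Ct_swap (l : Fin n → ℤ) {i j : Fin n} (hij : i < j) :
    Ct (l ∘ Equiv.swap i j) = Ct l + 2 * ((j : ℕ) - (i : ℕ)) * (l j - l i) := by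
  have hne : i ≠ j := ne_of_lt hij
  rw [Ct, sum_two (g := fun p : Fin n => l p * (l p - 2 * (p : ℕ) - 1)) hne, ← Ct]
  · simp only [Function.comp, Equiv.swap_apply_left, Equiv.swap_apply_right]
    ring
  · intro p h1 h2
    simp only [Function.comp, Equiv.swap_apply_of_ne_of_ne h1 h2]

lemma Ct_raise (l : Fin n → ℤ) {i j : Fin n} (hij : i < j) :
    Ct (l + ep i - ep j) = Ct l + 2 * (l i - l j + (j : ℕ) - (i : ℕ) + 1) := by
  have hne : i ≠ j := ne_of_lt hij
  rw [Ct, sum_two (g := fun p : Fin n => l p * (l p - 2 * (p : ℕ) - 1)) hne, ← Ct]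
  · simp [ep, hne, hne.symm]
    ring
  · intro p h1 h2
    simp [ep, h1, h2]

lemma sum_raise (l : Fin n → ℤ) (i j : Fin n) : ∑ p, (l + ep i - ep j) p = ∑ p, l p := by
  simp [ep, Finset.sum_add_distrib, Finset.sum_sub_distrib]

lemma lap_wt [CharZero k] {l : Fin n → ℤ} {c : KR k n} (h : c ∈ Wt l) :
    (2:k) • (dK (del c) + del (dK c)) = (Ct l : k) • c +
      (2:k) • ∑ i : Fin n, ∑ j : Fin n, (if i < j then ee j i (ee i j c) else 0) := by
  rw [lapl]
  set F : Fin n → Fin n → KR k n := fun i j => if i < j then ee j i (ee i j c) else 0 with hF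
  change _ = (Ct l : k) • c + (2:k) • ∑ i, ∑ j, F i j
  have e1 : ∀ p r, ee p r (ee r p c) = F p r + F r p + ((if p < r then (l p : k) - l r else 0)
      + (if p = r then (l p : k) * l p else 0)) • c := by
    intro p r
    rcases lt_trichotomy p r with hlt | heq | hgt
    · simp only [hF, hlt, not_lt_of_gt hlt, if_true, if_false, ne_of_lt hlt]
      rw [ee_comm, h p, h r, dl_self, dl_self]
      module
    · subst heq
      simp only [hF, lt_irrefl, if_true, if_false]
      rw [h p, map_smul, h p]; module
    · simp only [hF, hgt, not_lt_of_gt hgt, if_true, if_false, ne_of_gt hgt]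
      module
  have e2 : ∑ p, ∑ r, F r p = ∑ p, ∑ r, F p r := Finset.sum_comm
  simp only [e1, Finset.sum_add_distrib, e2, ← Finset.sum_smul]
  have e3 : ∑ p : Fin n, ee p p c = (∑ p, (l p : k)) • c := by
    rw [Finset.sum_smul]; exact Finset.sum_congr rfl fun p _ => h p
  have e4 : ∑ p : Fin n, ∑ r : Fin n, (if p < r then (l p : k) - l r else 0)
      = ∑ p : Fin n, (l p : k) * (n - 1 - 2 * (p : ℕ)) := by
    have a1 : ∀ p r : Fin n, (if p < r then (l p : k) - l r else 0) =
       (if p < r then (l p : k) else 0) - (if p < r then (l r : k) else 0) := by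
      intro p r; split_ifs <;> simp
    simp only [a1, Finset.sum_sub_distrib]
    rw [Finset.sum_comm (f := fun p r : Fin n => (if p < r then (l r : k) else 0)),
      ← Finset.sum_sub_distrib]
    refine Finset.sum_congr rfl fun p _ => ?_
    rw [← Finset.sum_filter, ← Finset.sum_filter, Finset.sum_const, Finset.sum_const]
    have b1 : (Finset.univ.filter fun r : Fin n => p < r).card = n - 1 - p := by
      rw [Finset.filter_lt_eq_Ioi, Fin.card_Ioi]
    have b2 : (Finset.univ.filter fun r : Fin n => r < p).card = p := by
      rw [Finset.filter_gt_eq_Iio, Fin.card_Iio]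
    rw [b1, b2, nsmul_eq_mul, nsmul_eq_mul]
    have := p.2
    have b3 : ((n - 1 - (p:ℕ) : ℕ) : k) = (n : k) - 1 - (p : ℕ) := by
      rw [Nat.cast_sub (by omega), Nat.cast_sub (by omega)]; simp
    rw [b3]; ring
  have e5 : (Ct l : k) = ∑ p : Fin n, (l p : k) * (n - 1 - 2 * (p : ℕ))
      + ∑ p : Fin n, (l p : k) * l p - n * ∑ p, (l p : k) := by
    rw [Ct, Finset.mul_sum, ← Finset.sum_add_distrib, ← Finset.sum_sub_distrib]
    push_cast
    refine Finset.sum_congr rfl fun p _ => ?_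
    ring
  rw [e3, e4, e5]
  simp only [Finset.sum_ite_eq, Finset.mem_univ, if_true]
  generalize ∑ p, ∑ r, F p r = G
  module

theorem lemmaA [CharZero k] (Q : Submodule k (KR k n)) (hd : ∀ u, dK u ∈ Q)
    (he : ∀ i j u, u ∈ Q → ee i j u ∈ Q)
    (hp : ∀ l (σ : Equiv.Perm (Fin n)), Bad Q l → Bad Q (l ∘ σ))
    {l : Fin n → ℤ} (hl : Bad Q l) : ∃ m, Bad Q m ∧ Ct m = 0 ∧ Ct l ≤ 0 := by
  classical
  set A : Set (Fin n → ℤ) := {m | Bad Q m ∧ ∑ p, m p = ∑ p, l p} with hA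
  have hfin : A.Finite := by
    apply (Set.finite_Icc (0 : Fin n → ℤ) (fun _ => ∑ p, l p)).subset
    rintro m ⟨hm, hs⟩
    refine ⟨hm.nonneg, fun i => ?_⟩
    rw [← hs]
    exact Finset.single_le_sum (f := m) (fun p _ => hm.nonneg p) (Finset.mem_univ i)
  obtain ⟨m, hmA, hmax⟩ := Set.exists_max_image A Ct hfin ⟨l, hl, rfl⟩
  have hmax' : ∀ m', Bad Q m' → ∑ p, m' p = ∑ p, m p → Ct m' ≤ Ct m :=
    fun m' h1 h2 => hmax m' ⟨h1, h2.trans hmA.2⟩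
  obtain ⟨hm, hs⟩ := hmA
  have hdom : ∀ i j : Fin n, i < j → m j ≤ m i := by
    intro i j hij
    by_contra hlt
    push Not at hlt
    have := hmax' _ (hp m (Equiv.swap i j) hm) (by
      exact Equiv.sum_comp (Equiv.swap i j) m)
    rw [Ct_swap m hij] at this
    have h1 : (0:ℤ) < ((j:ℕ):ℤ) - ((i:ℕ):ℤ) := by
      have : (i:ℕ) < (j:ℕ) := hij
      omega
    have h2 : 0 < m j - m i := by omega
    nlinarith [mul_pos h1 h2]
  obtain ⟨c, hc, hdc, hcQ⟩ := hm
  have hraise : ∀ i j : Fin n, i < j → ee i j c ∈ Q := by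
    intro i j hij
    by_contra hq
    have := hmax' (m + ep i - ep j) ⟨_, Wt_ee i j hc, by rw [← ee_dK, hdc, map_zero], hq⟩
      (sum_raise m i j)
    rw [Ct_raise m hij] at this
    have := hdom i j hij
    have : (i:ℕ) < (j:ℕ) := hij
    omega
  have h1 := lap_wt hc
  have h2 : (Ct m : k) • c ∈ Q := by
    rw [← sub_eq_iff_eq_add] at h1
    rw [← h1, hdc, map_zero, add_zero]
    refine Q.sub_mem (Q.smul_mem _ (hd _)) (Q.smul_mem _ (Q.sum_mem fun i _ => Q.sum_mem fun j _ => ?_))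
    split_ifs with hij
    · exact he _ _ _ (hraise i j hij)
    · exact zero_mem _
  have h3 : Ct m = 0 := by
    by_contra h0
    exact hcQ ((Submodule.smul_mem_iff _ (by exact_mod_cast h0)).1 h2)
  exact ⟨m, ⟨c, hc, hdc, hcQ⟩, h3, h3 ▸ hmax l ⟨hl, rfl⟩⟩

lemma sum_swap4' {a b c d : ℕ} {V : Type} [AddCommMonoid V]
    (f : Fin a → Fin b → Fin c → Fin d → V) :
    ∑ p, ∑ r, ∑ s, ∑ t, f p r s t = ∑ s, ∑ t, ∑ p, ∑ r, f p r s t := by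
  have h : ∀ {a b c d : ℕ} (g : Fin a → Fin b → Fin c → Fin d → V), ∑ p, ∑ r, ∑ s, ∑ t, g p r s t =
      ∑ x : Fin a × Fin b, ∑ y : Fin c × Fin d, g x.1 x.2 y.1 y.2 := by
    intro a b c d g
    simp only [Fintype.sum_prod_type]
  rw [h, h (fun s t p r => f p r s t)]
  exact Finset.sum_comm

section functor
variable {m : ℕ}
def substM (A : Matrix (Fin n) (Fin m) k) : S k n →ₐ[k] S k m :=
  aeval (fun i => ∑ j, A i j • X j)

lemma substM_isHomogeneous (A : Matrix (Fin n) (Fin m) k) {d : ℕ} {f : S k n}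
    (hf : f.IsHomogeneous d) : (substM A f).IsHomogeneous d := by
  have hg : ∀ i, ((∑ j, A i j • X j : S k m)).IsHomogeneous 1 := by
    intro i
    rw [← mem_homogeneousSubmodule]
    exact Submodule.sum_mem _ fun j _ => Submodule.smul_mem _ _
      ((mem_homogeneousSubmodule 1 _).2 (isHomogeneous_X _ _))
  simpa [substM] using hf.aeval _ hg

def substM2 (A : Matrix (Fin n) (Fin m) k) : S2 k n →ₗ[k] S2 k m :=
  LinearMap.restrict (substM A).toLinearMap
    (fun x hx => by
      rw [mem_homogeneousSubmodule] at hx ⊢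
      exact substM_isHomogeneous A hx)

def phi0 (A : Matrix (Fin n) (Fin m) k) : KK k n →ₐ[k] KK k m :=
  Algebra.TensorProduct.map (substM A) (ExteriorAlgebra.map (substM2 A))

def phi (A : Matrix (Fin n) (Fin m) k) : KR k n →ₐ[k] KR k m := phi0 A

lemma gact_eq (g : GL (Fin n) k) : (gact g : KK k n →ₐ[k] KK k n) = phi0 (g : Matrix (Fin n) (Fin n) k) := rfl

lemma phi_xx0 (A : Matrix (Fin n) (Fin m) k) (i : Fin n) :
    phi0 A (xx0 i) = ∑ j, A i j • (xx0 j : KK k m) := by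
  simp only [phi0, xx0, Algebra.TensorProduct.map_tmul, map_one, substM, aeval_X,
    TensorProduct.sum_tmul, TensorProduct.smul_tmul']

lemma phi_yy0 (A : Matrix (Fin n) (Fin m) k) (i j : Fin n) :
    phi0 A (yy0 i j) = ∑ a, ∑ b, (A i a * A j b) • (yy0 a b : KK k m) := by
  have h : substM2 A (q i j) = ∑ a, ∑ b, (A i a * A j b) • (q a b : S2 k m) := by
    apply Subtype.ext
    simp only [substM2, LinearMap.coe_restrict_apply, AlgHom.toLinearMap_apply, q, mulW, xv,
      map_mul, substM, aeval_X, AddSubmonoidClass.coe_finsetSum, Submodule.coe_smul,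
      Finset.sum_mul_sum, smul_mul_smul_comm]
  simp only [phi0, yy0, Algebra.TensorProduct.map_tmul, map_one, ExteriorAlgebra.map_apply_ι, h,
    map_sum, map_smul, TensorProduct.tmul_sum, TensorProduct.tmul_smul]

lemma phi_xx (A : Matrix (Fin n) (Fin m) k) (i : Fin n) :
    phi A (xx i) = ∑ j, A i j • (xx j : KR k m) := phi_xx0 A i
lemma phi_yy (A : Matrix (Fin n) (Fin m) k) (i j : Fin n) :
    phi A (yy i j) = ∑ a, ∑ b, (A i a * A j b) • (yy a b : KR k m) := phi_yy0 A i j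

lemma phi_xxm (A : Matrix (Fin n) (Fin m) k) (i : Fin n) (u : KR k n) :
    phi A (xx i * u) = ∑ j, A i j • (xx j * phi A u) := by
  rw [map_mul, phi_xx, Finset.sum_mul]; simp only [smul_mul_assoc]
lemma phi_yym (A : Matrix (Fin n) (Fin m) k) (i j : Fin n) (u : KR k n) :
    phi A (yy i j * u) = ∑ a, ∑ b, (A i a * A j b) • (yy a b * phi A u) := by
  rw [map_mul, phi_yy, Finset.sum_mul]; simp only [smul_mul_assoc, Finset.sum_mul]

lemma phi_one (u : KR k n) : phi (1 : Matrix (Fin n) (Fin n) k) u = u := by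
  induction u using KR_ind with
  | h1 => simp
  | hadd u v hu hv => simp [hu, hv]
  | hsmul c u hu => simp [hu]
  | hx i u hu => rw [phi_xxm, hu]; simp [Matrix.one_apply]
  | hy i j u hu => rw [phi_yym, hu]; simp [Matrix.one_apply, ite_and]

lemma phi_phi {p : ℕ} (A : Matrix (Fin n) (Fin m) k) (B : Matrix (Fin m) (Fin p) k) (u : KR k n) :
    phi B (phi A u) = phi (A * B) u := by
  induction u using KR_ind with
  | h1 => simp
  | hadd u v hu hv => simp [hu, hv]
  | hsmul c u hu => simp [hu]
  | hx i u hu =>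
    rw [phi_xxm, phi_xxm, ← hu]
    simp only [map_sum, map_smul, phi_xxm, Finset.smul_sum, Matrix.mul_apply, Finset.sum_smul,
      smul_smul]
    exact Finset.sum_comm
  | hy i j u hu =>
    rw [phi_yym, phi_yym, ← hu]
    simp only [map_sum, map_smul, phi_yym, Finset.smul_sum, Matrix.mul_apply, Finset.sum_smul,
      smul_smul, Finset.sum_mul_sum]
    rw [sum_swap4']
    refine Finset.sum_congr rfl fun a _ => Finset.sum_congr rfl fun b _ =>
      Finset.sum_congr rfl fun c _ => Finset.sum_congr rfl fun d _ => ?_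
    congr 1; ring

lemma phi_dK [CharZero k] (A : Matrix (Fin n) (Fin m) k) (u : KR k n) :
    phi A (dK u) = dK (phi A u) := by
  induction u using KR_ind with
  | h1 => simp [dK_one]
  | hadd u v hu hv => simp [hu, hv]
  | hsmul c u hu => simp [hu]
  | hx i u hu =>
    simp only [dK_xx, phi_xxm, map_sum, map_smul, hu]
  | hy i j u hu =>
    simp only [dK_yy, phi_xxm, phi_yym, map_sum, map_smul, hu, map_sub, smul_sub,
      Finset.sum_sub_distrib, mul_smul, Finset.mul_sum, Finset.smul_sum, mul_smul_comm]

lemma ee_xx' (j b : Fin n) (u : KR k n) :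
    ee j j (xx b * u) = (dl j b : k) • (xx b * u) + xx b * ee j j u := by
  rw [ee_xx]
  by_cases h : j = b
  · subst h; rfl
  · simp only [dl_ne h, zero_smul]
lemma ee_yy' (j a b : Fin n) (u : KR k n) :
    ee j j (yy a b * u) = (dl j a + dl j b : k) • (yy a b * u) + yy a b * ee j j u := by
  rw [ee_yy, add_smul]
  congr 2
  · by_cases h : j = a
    · subst h; rfl
    · simp only [dl_ne h, zero_smul]
  · by_cases h : j = b
    · subst h; rw [yy_symm]
    · simp only [dl_ne h, zero_smul]

lemma ee_phi (A : Matrix (Fin n) (Fin m) k) (i : Fin n) (j : Fin m)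
    (hA : ∀ a b, A a b ≠ 0 → (a = i ↔ b = j)) (u : KR k n) :
    ee j j (phi A u) = phi A (ee i i u) := by
  have h1 : ∀ a b, A a b * dl j b = A a b * dl i a := by
    intro a b
    by_cases h : A a b = 0
    · simp [h]
    · have := hA a b h
      congr 1
      simp only [dl, eq_comm (a := i), eq_comm (a := j), this]
  induction u using KR_ind with
  | h1 => simp [ee_one]
  | hadd u v hu hv => simp [hu, hv]
  | hsmul c u hu => simp [hu]
  | hx a u hu =>
    simp only [phi_xxm, ee_xx', map_sum, map_add, map_smul, hu, smul_add, Finset.sum_add_distrib,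
      smul_smul, h1, Finset.smul_sum]
    congr 1
    exact Finset.sum_congr rfl fun b _ => by rw [mul_comm]
  | hy a b u hu =>
    simp only [phi_yym, ee_yy', map_sum, map_add, map_smul, hu, smul_add, Finset.sum_add_distrib,
      smul_smul, Finset.smul_sum]
    congr 1
    refine Finset.sum_congr rfl fun c _ => Finset.sum_congr rfl fun d _ => ?_
    congr 1
    linear_combination (A b d) * h1 a c + (A a c) * h1 b d
end functor

def GLstab (Q : Submodule k (KR k n)) : Prop :=
  ∀ (g : GL (Fin n) k) u, u ∈ Q → phi (g : Matrix (Fin n) (Fin n) k) u ∈ Q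

lemma phi_inv (g : GL (Fin n) k) (u : KR k n) :
    phi ((g⁻¹ : GL (Fin n) k) : Matrix (Fin n) (Fin n) k) (phi (g : Matrix (Fin n) (Fin n) k) u) = u := by
  rw [phi_phi, ← Units.val_mul, mul_inv_cancel, Units.val_one, phi_one]

/-- permutation matrix -/
def pm (τ : Equiv.Perm (Fin n)) : GL (Fin n) k where
  val := Matrix.of fun a b => if b = τ a then 1 else 0
  inv := Matrix.of fun a b => if τ b = a then 1 else 0
  val_inv := by
    ext a b
    simp [Matrix.mul_apply, Matrix.one_apply, eq_comm (a := a)]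
  inv_val := by
    ext a b
    rw [Matrix.mul_apply, Finset.sum_eq_single (τ.symm a)]
    · simp [Matrix.one_apply, eq_comm (a := a)]
    · intro x _ hx
      have : τ x ≠ a := fun h => hx (by rw [← h, Equiv.symm_apply_apply])
      simp [this]
    · simp

lemma Wt_pm {l : Fin n → ℤ} {u : KR k n} (τ : Equiv.Perm (Fin n)) (h : u ∈ Wt l) :
    phi ((pm τ : GL (Fin n) k) : Matrix (Fin n) (Fin n) k) u ∈ Wt (l ∘ τ.symm) := by
  intro j
  rw [ee_phi _ (τ.symm j) j, h, map_smul]; rfl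
  intro a b hab
  have hb : b = τ a := by by_contra h; exact hab (if_neg h)
  rw [hb, Equiv.eq_symm_apply]

lemma bad_perm [CharZero k] {Q : Submodule k (KR k n)} (hQ : GLstab Q) (l : Fin n → ℤ)
    (σ : Equiv.Perm (Fin n)) (h : Bad Q l) : Bad Q (l ∘ σ) := by
  obtain ⟨c, hc, hd, hq⟩ := h
  refine ⟨phi ((pm σ.symm : GL (Fin n) k) : Matrix (Fin n) (Fin n) k) c, Wt_pm σ.symm hc, ?_, ?_⟩
  · rw [← phi_dK, hd, map_zero]
  · intro h
    have := hQ (pm σ.symm)⁻¹ _ h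
    rw [phi_inv] at this
    exact hq this

def ev (s : k) : Polynomial (KR k n) →+* KR k n :=
  Polynomial.eval₂RingHom' (RingHom.id _) (algebraMap k (KR k n) s)
    (fun a => (Algebra.commutes s a).symm)

lemma ev_C (s : k) (a : KR k n) : ev s (Polynomial.C a) = a := by
  change Polynomial.eval₂ _ _ _ = _
  simp
lemma ev_X (s : k) : ev s (Polynomial.X : Polynomial (KR k n)) = algebraMap k (KR k n) s := by
  change Polynomial.eval₂ _ _ _ = _
  simp

def elm (i j : Fin n) (s : k) : Matrix (Fin n) (Fin n) k := fun a b => dl a b + s * (dl a j * dl b i)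

lemma elm_poly (i j : Fin n) (u : KR k n) : ∃ P : Polynomial (KR k n),
    (∀ s, phi (elm i j s) u = ev s P) ∧ P.coeff 0 = u ∧ P.coeff 1 = ee i j u := by
  induction u using KR_ind with
  | h1 => exact ⟨1, by simp, by simp, by simp [ee_one, Polynomial.coeff_one]⟩
  | hadd u v hu hv =>
    obtain ⟨P, h1, h2, h3⟩ := hu
    obtain ⟨P', h1', h2', h3'⟩ := hv
    exact ⟨P + P', by simp [h1, h1'], by simp [h2, h2'], by simp [h3, h3']⟩
  | hsmul c u hu =>
    obtain ⟨P, h1, h2, h3⟩ := hu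
    refine ⟨Polynomial.C (algebraMap k _ c) * P, fun s => ?_, ?_, ?_⟩
    · rw [map_smul, map_mul, ev_C, h1, Algebra.smul_def]
    · rw [Polynomial.coeff_C_mul, h2, Algebra.smul_def]
    · rw [Polynomial.coeff_C_mul, h3, map_smul, Algebra.smul_def]
  | hx a u hu =>
    obtain ⟨P, h1, h2, h3⟩ := hu
    refine ⟨Polynomial.C (xx a) * P + Polynomial.C ((dl j a : k) • xx i) * P * Polynomial.X,
      fun s => ?_, ?_, ?_⟩
    · rw [phi_xxm, map_add, map_mul, map_mul, map_mul, ev_C, ev_C, ev_X, h1, ← Algebra.commutes,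
        ← Algebra.smul_def]
      simp only [elm, add_smul, Finset.sum_add_distrib, dl_smul_sum, mul_smul, ← Finset.smul_sum,
        dl_smul_sum', smul_mul_assoc, dl_symm a j]
    · simp [h2]
    · simp [h2, h3, ee_xx, Polynomial.coeff_C_mul, add_comm]
  | hy a b u hu =>
    obtain ⟨P, h1, h2, h3⟩ := hu
    refine ⟨Polynomial.C (yy a b) * P + Polynomial.C ((dl j a : k) • yy i b + (dl j b : k) • yy i a) * P * Polynomial.X
      + Polynomial.C ((dl j a * dl j b : k) • yy i i) * P * Polynomial.X * Polynomial.X,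
      fun s => ?_, ?_, ?_⟩
    · rw [phi_yym, map_add, map_add, map_mul, map_mul, map_mul, map_mul, map_mul, map_mul,
        ev_C, ev_C, ev_C, ev_X, h1]
      simp only [← Algebra.commutes, ← Algebra.smul_def]
      simp only [elm, add_mul, mul_add, add_smul, Finset.sum_add_distrib, mul_smul, ← Finset.smul_sum,
        dl_smul_sum', dl_smul_sum, smul_mul_assoc, dl_symm a j, dl_symm b j, yy_symm a i]
      module
    · simp [h2]
    · simp [h2, h3, ee_yy, Polynomial.coeff_C_mul, add_comm, add_mul]

lemma elm_mul (i j : Fin n) (s t : k) : elm i j s * elm i j t = elm i j (s + t + s * t * dl i j) := by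
  ext a b
  have h1 : ∀ (a : Fin n) (f : Fin n → k), ∑ c, dl a c * f c = f a := fun a f => by simp [dl]
  have h2 : ∀ c, elm i j s a c * elm i j t c b = dl a c * (dl c b + t * (dl c j * dl b i))
     + dl i c * ((dl c b + t * (dl c j * dl b i)) * (s * dl a j)) := by
    intro c; simp only [elm, dl_symm c i]; ring
  rw [Matrix.mul_apply]
  simp only [h2, Finset.sum_add_distrib, h1]
  simp only [elm, dl_symm i b]
  ring
lemma elm_zero (i j : Fin n) : elm i j (0 : k) = 1 := by
  ext a b
  simp [elm, dl, Matrix.one_apply]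

def elmGL (i j : Fin n) (s : k) (hs : 1 + s * dl i j ≠ 0) : GL (Fin n) k where
  val := elm i j s
  inv := elm i j (-(s / (1 + s * dl i j)))
  val_inv := by
    rw [elm_mul, ← elm_zero i j]
    congr 1
    field_simp; ring
  inv_val := by
    rw [elm_mul, ← elm_zero i j]
    congr 1
    field_simp; ring

lemma ee_stab [CharZero k] {Q : Submodule k (KR k n)} (hQ : GLstab Q) (i j : Fin n) (u : KR k n)
    (hu : u ∈ Q) : ee i j u ∈ Q := by
  obtain ⟨P, h1, h2, h3⟩ := elm_poly i j u
  by_contra hq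
  rw [← h3] at hq
  obtain ⟨ℓ, hl2, hl⟩ := Submodule.exists_le_ker_of_notMem hq
  set p : Polynomial k := ∑ r ∈ P.support, Polynomial.monomial r (ℓ (P.coeff r)) with hp
  have h4 : ∀ s, p.eval s = ℓ (ev s P) := by
    intro s
    rw [hp, Polynomial.eval_finsetSum]
    have : ev s P = Polynomial.eval₂ (RingHom.id _) (algebraMap k (KR k n) s) P := rfl
    rw [this, Polynomial.eval₂_eq_sum, Polynomial.sum, map_sum]
    simp only [Polynomial.eval_monomial, RingHom.id_apply]
    refine Finset.sum_congr rfl fun r _ => ?_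
    rw [← map_pow, ← Algebra.commutes, ← Algebra.smul_def, map_smul, smul_eq_mul, mul_comm]
  have h5 : p = 0 := by
    apply Polynomial.eq_zero_of_infinite_isRoot
    refine Set.Infinite.mono (s := {-1}ᶜ) ?_ (Set.finite_singleton (-1:k)).infinite_compl
    intro s hs
    have hs' : 1 + s * dl i j ≠ 0 := by
      simp only [dl]
      split_ifs
      · intro h; apply hs; rw [Set.mem_singleton_iff]; linear_combination h
      · simp
    have := hQ (elmGL i j s hs') u hu
    change p.eval s = 0
    rw [h4, ← h1]
    exact hl this
  apply hl2
  have h6 : p.coeff 1 = ℓ (P.coeff 1) := by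
    rw [hp, Polynomial.finsetSum_coeff]
    simp only [Polynomial.coeff_monomial, Finset.sum_ite_eq', Polynomial.mem_support_iff]
    split_ifs with h
    · rfl
    · rw [Polynomial.notMem_support_iff.1 h, map_zero]
  rw [← h6, h5, Polynomial.coeff_zero]

theorem lemmaA' [CharZero k] (Q : Submodule k (KR k n)) (hd : ∀ u, dK u ∈ Q) (hQ : GLstab Q)
    {l : Fin n → ℤ} (hl : Bad Q l) : ∃ m, Bad Q m ∧ Ct m = 0 ∧ Ct l ≤ 0 :=
  lemmaA Q hd (ee_stab hQ) (bad_perm hQ) hl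

lemma range_stab [CharZero k] : GLstab (LinearMap.range (dK : KR k n →ₗ[k] KR k n)) := by
  rintro g _ ⟨u, rfl⟩
  exact ⟨_, (phi_dK _ _).symm⟩

def iM : Matrix (Fin n) (Fin (n+1)) k := Matrix.of fun a b => if b = Fin.castSucc a then 1 else 0
def pM : Matrix (Fin (n+1)) (Fin n) k := Matrix.of fun a b => if a = Fin.castSucc b then 1 else 0
def inc : KR k n →ₐ[k] KR k (n+1) := phi iM
def prj : KR k (n+1) →ₐ[k] KR k n := phi pM

lemma inc_xx (i : Fin n) : (inc (xx i) : KR k (n+1)) = xx i.castSucc := by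
  simp [inc, phi_xx, iM]
lemma inc_yy (i j : Fin n) : (inc (yy i j) : KR k (n+1)) = yy i.castSucc j.castSucc := by
  simp [inc, phi_yy, iM]
lemma prj_xx (i : Fin n) : (prj (xx i.castSucc) : KR k n) = xx i := by
  simp [prj, phi_xx, pM]
lemma prj_xl : (prj (xx (Fin.last n)) : KR k n) = 0 := by
  simp [prj, phi_xx, pM, (Fin.castSucc_ne_last _).symm]
lemma prj_yy (i j : Fin n) : (prj (yy i.castSucc j.castSucc) : KR k n) = yy i j := by
  simp [prj, phi_yy, pM]
lemma prj_yl (i : Fin (n+1)) : (prj (yy i (Fin.last n)) : KR k n) = 0 := by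
  simp [prj, phi_yy, pM, (Fin.castSucc_ne_last _).symm]
lemma prj_inc (u : KR k n) : prj (inc u) = u := by
  rw [prj, inc, phi_phi]
  have : (iM : Matrix (Fin n) (Fin (n+1)) k) * (pM : Matrix (Fin (n+1)) (Fin n) k) = 1 := by
    ext a b; simp [iM, pM, Matrix.mul_apply, Matrix.one_apply, eq_comm (a := a)]
  rw [this, phi_one]
lemma inc_dK [CharZero k] (u : KR k n) : inc (dK u) = dK (inc u) := phi_dK _ _
lemma prj_dK [CharZero k] (u : KR k (n+1)) : prj (dK u) = dK (prj u) := phi_dK _ _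

lemma ee_inc (i : Fin n) (u : KR k n) : ee i.castSucc i.castSucc (inc u) = inc (ee i i u) := by
  refine ee_phi _ _ _ ?_ u
  intro a b hab
  have : b = a.castSucc := by by_contra h; exact hab (if_neg h)
  rw [this, Fin.castSucc_inj]
lemma ee_prj (i : Fin n) (u : KR k (n+1)) : ee i i (prj u) = prj (ee i.castSucc i.castSucc u) := by
  refine ee_phi _ _ _ ?_ u
  intro a b hab
  have : a = b.castSucc := by by_contra h; exact hab (if_neg h)
  rw [this, Fin.castSucc_inj]
lemma ee_last_inc (u : KR k n) : ee (Fin.last n) (Fin.last n) (inc u) = 0 := by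
  induction u using KR_ind with
  | h1 => simp [ee_one]
  | hadd u v hu hv => simp [hu, hv]
  | hsmul c u hu => simp [hu]
  | hx i u hu =>
    rw [map_mul, inc_xx, ee_xx', hu, dl_ne (Fin.castSucc_ne_last _).symm]; simp
  | hy i j u hu =>
    rw [map_mul, inc_yy, ee_yy', hu, dl_ne (Fin.castSucc_ne_last _).symm,
      dl_ne (Fin.castSucc_ne_last _).symm]; simp

/-- the sum of positive eigenspaces -/
def Mpos : Submodule k (KR k (n+1)) :=
  ⨆ r : ℕ, Module.End.eigenspace (ee (Fin.last n) (Fin.last n)) ((r : k) + 1)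

lemma Mpos_mul (a : KR k (n+1)) (e : ℕ)
    (ha : ∀ u, ee (Fin.last n) (Fin.last n) (a * u) = (e : k) • (a * u)
      + a * ee (Fin.last n) (Fin.last n) u) (u : KR k (n+1)) (hu : u ∈ Mpos) :
    a * u ∈ Mpos := by
  unfold Mpos at hu ⊢
  induction hu using Submodule.iSup_induction' with
  | mem r x hx =>
    refine Submodule.mem_iSup_of_mem (r + e) ?_
    rw [Module.End.mem_eigenspace_iff] at *
    rw [ha, hx, Nat.cast_add, mul_smul_comm]; module
  | zero => simp
  | add x y _ _ hx hy => rw [mul_add]; exact add_mem hx hy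

lemma sub_inc_mem (u : KR k (n+1)) : u - inc (prj u) ∈ Mpos := by
  have hx1 : ∀ v : KR k (n+1), ee (Fin.last n) (Fin.last n) v = 0 → xx (Fin.last n) * v ∈ Mpos := by
    intro v hv
    refine Submodule.mem_iSup_of_mem 0 ?_
    rw [Module.End.mem_eigenspace_iff, ee_xx', hv, dl_self]; simp
  have hy1 : ∀ (i : Fin (n+1)) (v : KR k (n+1)), ee (Fin.last n) (Fin.last n) v = 0 →
      yy i (Fin.last n) * v ∈ Mpos := by
    intro i v hv
    by_cases hi : Fin.last n = i
    · subst hi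
      refine Submodule.mem_iSup_of_mem 1 ?_
      rw [Module.End.mem_eigenspace_iff, ee_yy', hv, dl_self]; simp
    · refine Submodule.mem_iSup_of_mem 0 ?_
      rw [Module.End.mem_eigenspace_iff, ee_yy', hv, dl_self, dl_ne hi]; simp
  have hx2 : ∀ i (v : KR k (n+1)), v ∈ Mpos → xx i * v ∈ Mpos := by
    intro i v hv
    refine Mpos_mul (xx i) (if Fin.last n = i then 1 else 0) (fun u => ?_) v hv
    rw [ee_xx', dl]; split_ifs <;> simp
  have hy2 : ∀ i j (v : KR k (n+1)), v ∈ Mpos → yy i j * v ∈ Mpos := by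
    intro i j v hv
    refine Mpos_mul (yy i j) ((if Fin.last n = i then 1 else 0) + (if Fin.last n = j then 1 else 0))
      (fun u => ?_) v hv
    rw [ee_yy', dl, dl]; split_ifs <;> simp [one_add_one_eq_two]
  have hT : ∀ v : KR k (n+1), ee (Fin.last n) (Fin.last n) (inc (prj v)) = 0 :=
    fun v => ee_last_inc _
  induction u using KR_ind with
  | h1 => simp
  | hadd u v hu hv =>
    simp only [map_add]; rw [add_sub_add_comm]; exact add_mem hu hv
  | hsmul c u hu => simp only [map_smul]; rw [← smul_sub]; exact Submodule.smul_mem _ _ hu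
  | hx i u hu =>
    have h3 : xx i * u = xx i * (u - inc (prj u)) + xx i * inc (prj u) := by
      rw [← mul_add, sub_add_cancel]
    induction i using Fin.lastCases with
    | last =>
      rw [map_mul, prj_xl, zero_mul, map_zero, sub_zero, h3]
      exact add_mem (hx2 _ _ hu) (hx1 _ (hT _))
    | cast i =>
      rw [map_mul, map_mul, prj_xx, inc_xx, ← mul_sub]
      exact hx2 _ _ hu
  | hy i j u hu =>
    have h3 : yy i j * u = yy i j * (u - inc (prj u)) + yy i j * inc (prj u) := by
      rw [← mul_add, sub_add_cancel]
    induction j using Fin.lastCases with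
    | last =>
      rw [map_mul, prj_yl, zero_mul, map_zero, sub_zero, h3]
      exact add_mem (hy2 _ _ _ hu) (hy1 _ _ (hT _))
    | cast j =>
      induction i using Fin.lastCases with
      | last =>
        rw [map_mul, yy_symm, prj_yl, zero_mul, map_zero, sub_zero, yy_symm, h3, yy_symm]
        rw [yy_symm] at h3
        exact add_mem (hy2 _ _ _ hu) (hy1 _ _ (hT _))
      | cast i =>
        rw [map_mul, map_mul, prj_yy, inc_yy, ← mul_sub]
        exact hy2 _ _ _ hu

lemma eq_inc_of_zero [CharZero k] (u : KR k (n+1)) (h : ee (Fin.last n) (Fin.last n) u = 0) :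
    u = inc (prj u) := by
  have h1 := sub_inc_mem u
  have h2 := (Module.End.eigenspaces_iSupIndep (ee (Fin.last n) (Fin.last n) : Module.End k (KR k (n+1)))) 0
  have h3 : u - inc (prj u) ∈ Module.End.eigenspace (ee (Fin.last n) (Fin.last n) : Module.End k (KR k (n+1))) 0 := by
    rw [Module.End.mem_eigenspace_iff, map_sub, h, ee_last_inc]; simp
  have h4 : (Mpos : Submodule k (KR k (n+1))) ≤ ⨆ j, ⨆ (_ : j ≠ 0),
      Module.End.eigenspace (ee (Fin.last n) (Fin.last n) : Module.End k (KR k (n+1))) j := by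
    refine iSup_le fun r => ?_
    exact le_iSup₂_of_le ((r : k) + 1) (Nat.cast_add_one_ne_zero r) le_rfl
  exact sub_eq_zero.1 (Submodule.disjoint_def.1 h2 _ h3 (h4 h1))

/-- the ideal generated by `x²` and `y_xx` -/
def JJ : Submodule k (KR k (n+1)) where
  carrier := {j | ∃ u v, j = xx (Fin.last n) * (xx (Fin.last n) * u) + yy (Fin.last n) (Fin.last n) * v}
  add_mem' := by
    rintro _ _ ⟨u, v, rfl⟩ ⟨u', v', rfl⟩
    exact ⟨u + u', v + v', by simp only [mul_add]; abel⟩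
  zero_mem' := ⟨0, 0, by simp⟩
  smul_mem' := by
    rintro c _ ⟨u, v, rfl⟩
    exact ⟨c • u, c • v, by simp only [mul_smul_comm, smul_add]⟩

/-- the ideal generated by `x` and `y_xx` -/
def NN : Submodule k (KR k (n+1)) where
  carrier := {j | ∃ u v, j = xx (Fin.last n) * u + yy (Fin.last n) (Fin.last n) * v}
  add_mem' := by
    rintro _ _ ⟨u, v, rfl⟩ ⟨u', v', rfl⟩
    exact ⟨u + u', v + v', by simp only [mul_add]; abel⟩
  zero_mem' := ⟨0, 0, by simp⟩
  smul_mem' := by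
    rintro c _ ⟨u, v, rfl⟩
    exact ⟨c • u, c • v, by simp only [mul_smul_comm, smul_add]⟩

lemma JJ_le_NN : (JJ : Submodule k (KR k (n+1))) ≤ NN := by
  rintro _ ⟨u, v, rfl⟩
  exact ⟨_, v, rfl⟩

lemma JJ_left (a j : KR k (n+1)) (hj : j ∈ JJ) : a * j ∈ JJ := by
  induction a using KR_ind generalizing j with
  | h1 => simpa using hj
  | hadd u v hu hv => rw [add_mul]; exact add_mem (hu _ hj) (hv _ hj)
  | hsmul c u hu => rw [smul_mul_assoc]; exact Submodule.smul_mem _ _ (hu _ hj)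
  | hx i u hu =>
    obtain ⟨a, b, h⟩ := hu _ hj
    exact ⟨xx i * a, xx i * b, by rw [mul_assoc, h, mul_add, xx_lc, xx_lc i, yx_lc]⟩
  | hy i j' u hu =>
    obtain ⟨a, b, h⟩ := hu _ hj
    exact ⟨yy i j' * a, - (yy i j' * b), by
      rw [mul_assoc, h, mul_add, yx_lc, yx_lc, mul_neg, yy_lc]⟩

lemma JJ_right (a j : KR k (n+1)) (hj : j ∈ JJ) : j * a ∈ JJ := by
  obtain ⟨u, v, rfl⟩ := hj
  exact ⟨u * a, v * a, by simp only [add_mul, mul_assoc]⟩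

lemma JJ_cycle [CharZero k] (j : KR k (n+1)) (hj : j ∈ JJ) (hd : dK j = 0) : ∃ w, j = dK w := by
  obtain ⟨a, b, rfl⟩ := hj
  set x : KR k (n+1) := xx (Fin.last n) with hx
  set z : KR k (n+1) := yy (Fin.last n) (Fin.last n) with hz
  set T : KR k (n+1) →ₗ[k] KR k (n+1) := (2⁻¹ : k) • CC (Fin.last n) (Fin.last n) with hT
  have Tx : ∀ u, T (x * u) = x * T u := fun u => by
    simp only [hT, hx, LinearMap.smul_apply, CC_xx, mul_smul_comm]
  have Tz : ∀ u, T (z * u) = u - z * T u := fun u => by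
    simp only [hT, hz, LinearMap.smul_apply, CC_yy, mul_smul_comm, dl_self, smul_sub, smul_smul]
    congr 1
    norm_num
  have TT : ∀ u, T (T u) = 0 := fun u => by
    simp only [hT, LinearMap.smul_apply, map_smul, CC_sq, smul_zero]
  have zz : ∀ u, z * (z * u) = 0 := fun u => yy_lsq _ _ _
  have zx : ∀ u, z * (x * u) = x * (z * u) := fun u => yx_lc _ _ _ _
  have Td : ∀ u, dK (T u) = - T (dK u) := fun u => by
    simp only [hT, LinearMap.smul_apply, map_smul, dK_CC, smul_neg]
  have dx : ∀ u, dK (x * u) = x * dK u := fun u => dK_xx _ _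
  have dz : ∀ u, dK (z * u) = x * (x * u) - z * dK u := fun u => dK_yy _ _ _
  clear_value T x z
  set a0 := a - z * T a with ha0
  set b0 := b + x * (x * T a) with hb0
  set b1 := b0 - z * T b0 with hb1
  have e1 : x * (x * a) + z * b = x * (x * a0) + z * b1 := by
    simp only [ha0, hb1, hb0, mul_sub, mul_add, zz, zx]; abel
  have Ta : T a0 = 0 := by simp [ha0, Tz, TT]
  have Tb : T b1 = 0 := by simp only [hb1, map_sub, Tz, TT]; simp
  rw [e1] at hd ⊢
  have h1 : T (x * (x * a0) + z * b1) = b1 := by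
    simp [Tx, Tz, Ta, Tb]
  have h2 : dK b1 = 0 := by rw [← h1, Td, hd, map_zero, neg_zero]
  have h3 : x * (x * (dK a0 + b1)) = 0 := by
    rw [← hd]; simp only [map_add, dx, dz, h2, mul_zero, sub_zero, mul_add]
  have h4 : dK a0 + b1 = 0 := by
    rw [hx] at h3
    exact xx_inj _ _ (xx_inj _ _ h3)
  refine ⟨z * a0, ?_⟩
  rw [dz, eq_neg_of_add_eq_zero_left h4]; simp

def yl : List (Fin n) → KR k (n+1)
  | [] => 1
  | j :: l => yy j.castSucc (Fin.last n) * yl l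

def Cl : List (Fin n) → KR k (n+1) →ₗ[k] KR k (n+1)
  | [] => LinearMap.id
  | j :: l => Cl l ∘ₗ CC (Fin.last n) j.castSucc

lemma yl_nil : yl ([] : List (Fin n)) = (1 : KR k (n+1)) := rfl
lemma yl_cons (j : Fin n) (l : List (Fin n)) :
    yl (j :: l) = (yy j.castSucc (Fin.last n) * yl l : KR k (n+1)) := rfl
lemma Cl_nil (u : KR k (n+1)) : Cl ([] : List (Fin n)) u = u := rfl
lemma Cl_cons (j : Fin n) (l : List (Fin n)) (u : KR k (n+1)) :
    Cl (j :: l) u = Cl l (CC (Fin.last n) j.castSucc u) := rfl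

lemma ee_last_apply (c : KR k (n+1)) : ee (Fin.last n) (Fin.last n) c =
    xx (Fin.last n) * PP (Fin.last n) c
      + (∑ j : Fin n, yy j.castSucc (Fin.last n) * CC (Fin.last n) j.castSucc c
      + yy (Fin.last n) (Fin.last n) * CC (Fin.last n) (Fin.last n) c) := by
  rw [ee_apply, Fin.sum_univ_castSucc]
  simp only [yy_symm (Fin.last n)]

theorem taylor [CharZero k] (m : ℕ) : ∀ (c : KR k (n+1)) (R : Submodule k (KR k (n+1))),
    ee (Fin.last n) (Fin.last n) c = (m : k) • c → JJ ≤ R →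
    (∀ l : List (Fin n), l.length = m → yl l * inc (prj (Cl l c)) ∈ R) →
    (∀ l : List (Fin n), l.length + 1 = m →
      xx (Fin.last n) * (yl l * inc (prj (Cl l (PP (Fin.last n) c)))) ∈ R) → c ∈ R := by
  induction m with
  | zero =>
    intro c R hc _ h1 _
    have := h1 [] rfl
    rw [yl_nil, Cl_nil, one_mul, ← eq_inc_of_zero] at this
    · exact this
    · simpa using hc
  | succ m ih =>
    intro c R hc hJ h1 h2
    have h3 : ((m + 1 : ℕ) : k) • c ∈ R := by
      rw [← hc, ee_last_apply]
      refine add_mem ?_ (add_mem (Submodule.sum_mem _ fun j _ => ?_) ?_)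
      · refine ih (PP (Fin.last n) c) (R.comap (LinearMap.mulLeft k (xx (Fin.last n)))) ?_ ?_ ?_ ?_
        · rw [ee_PP, hc, dl_self, map_smul, Nat.cast_succ]; module
        · intro j hj; exact hJ (JJ_left _ _ hj)
        · intro l hl
          exact h2 l (by omega)
        · intro l hl
          exact hJ ⟨_, 0, by simp; rfl⟩
      · refine ih (CC (Fin.last n) j.castSucc c)
          (R.comap (LinearMap.mulLeft k (yy j.castSucc (Fin.last n)))) ?_ ?_ ?_ ?_
        · rw [ee_CC, hc, dl_self, dl_ne (Fin.castSucc_ne_last _).symm, map_smul, Nat.cast_succ]; module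
        · intro j hj; exact hJ (JJ_left _ _ hj)
        · intro l hl
          have := h1 (j :: l) (by simp [hl])
          rwa [yl_cons, Cl_cons, mul_assoc] at this
        · intro l hl
          have := h2 (j :: l) (by simp [hl])
          rw [yl_cons, Cl_cons, mul_assoc, ← yx_lc, PP_CC] at this
          exact this
      · exact hJ ⟨0, _, by simp; rfl⟩
    exact (Submodule.smul_mem_iff _ (Nat.cast_add_one_ne_zero m)).1 (by simpa using h3)

lemma yl_mem (j : Fin n) (l : List (Fin n)) (h : j ∈ l) :
    yy j.castSucc (Fin.last n) * yl l = (0 : KR k (n+1)) := by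
  induction l with
  | nil => simp at h
  | cons i l ih =>
    rw [yl_cons]
    rcases List.mem_cons.1 h with rfl | h
    · rw [yy_lsq]
    · rw [yy_lc, ih h, mul_zero, neg_zero]

lemma yl_dup (l : List (Fin n)) (h : ¬ l.Nodup) : yl l = (0 : KR k (n+1)) := by
  induction l with
  | nil => simp at h
  | cons i l ih =>
    rw [yl_cons]
    by_cases hi : i ∈ l
    · exact yl_mem i l hi
    · rw [ih, mul_zero]; intro h'; exact h (List.nodup_cons.2 ⟨hi, h'⟩)

lemma Cl_mem (j : Fin n) (l : List (Fin n)) (h : j ∈ l) (u : KR k (n+1)) :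
    Cl l (CC (Fin.last n) j.castSucc u) = 0 := by
  induction l generalizing u with
  | nil => simp at h
  | cons i l ih =>
    rw [Cl_cons]
    rcases List.mem_cons.1 h with rfl | h
    · rw [CC_sq, map_zero]
    · rw [CC_CC, map_neg, ih h, neg_zero]

lemma Cl_dup (l : List (Fin n)) (h : ¬ l.Nodup) (u : KR k (n+1)) : Cl l u = 0 := by
  induction l generalizing u with
  | nil => simp at h
  | cons i l ih =>
    rw [Cl_cons]
    by_cases hi : i ∈ l
    · exact Cl_mem i l hi u
    · rw [ih]; intro h'; exact h (List.nodup_cons.2 ⟨hi, h'⟩)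

lemma dK_Cl (l : List (Fin n)) (u : KR k (n+1)) : dK (Cl l u) = ((-1:k)^l.length) • Cl l (dK u) := by
  induction l generalizing u with
  | nil => simp [Cl_nil]
  | cons i l ih =>
    rw [Cl_cons, ih, dK_CC, Cl_cons, map_neg, List.length_cons, pow_succ]
    module

lemma Cl_xx (l : List (Fin n)) (a : Fin (n+1)) (u : KR k (n+1)) : Cl l (xx a * u) = xx a * Cl l u := by
  induction l generalizing u with
  | nil => rfl
  | cons i l ih => rw [Cl_cons, CC_xx, ih, Cl_cons]

lemma Cl_NN (l : List (Fin n)) (u : KR k (n+1)) (h : u ∈ NN) : Cl l u ∈ NN := by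
  induction l generalizing u with
  | nil => exact h
  | cons i l ih =>
    rw [Cl_cons]
    apply ih
    obtain ⟨a, b, rfl⟩ := h
    refine ⟨CC (Fin.last n) i.castSucc a, - CC (Fin.last n) i.castSucc b, ?_⟩
    rw [map_add, CC_xx, CC_yy, dl_ne (Fin.castSucc_ne_last i)]
    simp

lemma prj_NN (u : KR k (n+1)) (h : u ∈ NN) : prj u = 0 := by
  obtain ⟨a, b, rfl⟩ := h
  simp [prj_xl, prj_yl]

lemma NN_ee (i : Fin (n+1)) (u : KR k (n+1)) (h : u ∈ NN) : ee i i u ∈ NN := by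
  obtain ⟨a, b, rfl⟩ := h
  rw [map_add, ee_xx', ee_yy']
  refine ⟨(dl i (Fin.last n) : k) • a + ee i i a, (dl i (Fin.last n) + dl i (Fin.last n) : k) • b + ee i i b, ?_⟩
  simp only [mul_add, mul_smul_comm]
  
lemma dK_yl [CharZero k] (l : List (Fin n)) (v : KR k (n+1)) : ∃ r,
    dK (yl l * v) = ((-1:k)^l.length) • (yl l * dK v) + xx (Fin.last n) * r := by
  induction l with
  | nil => exact ⟨0, by simp [yl_nil]⟩
  | cons j l ih =>
    obtain ⟨r, hr⟩ := ih
    refine ⟨xx j.castSucc * (yl l * v) - yy j.castSucc (Fin.last n) * r, ?_⟩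
    rw [yl_cons, mul_assoc, dK_yy, hr, mul_sub, mul_add, mul_smul_comm, yx_lc, xx_lc, mul_assoc,
      List.length_cons, pow_succ]
    module

/-- solving for `yl l * d v` -/
lemma yl_dK [CharZero k] (l : List (Fin n)) (v : KR k (n+1)) : ∃ w r,
    yl l * dK v = dK w + xx (Fin.last n) * r := by
  obtain ⟨r, hr⟩ := dK_yl l v
  refine ⟨((-1:k)^l.length) • (yl l * v), -((-1:k)^l.length) • r, ?_⟩
  rw [map_smul, hr, smul_add, smul_smul, ← mul_pow, mul_smul_comm]
  simp

lemma Wt_prjCl (L : List (Fin n)) (l : Fin (n+1) → ℤ) (v : KR k (n+1)) (h : v ∈ Wt l) :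
    prj (Cl L v) ∈ Wt (fun i : Fin n => l i.castSucc - L.count i) := by
  induction L generalizing v l with
  | nil =>
    intro i
    rw [ee_prj, Cl_nil, h, map_smul]; simp
  | cons j L ih =>
    rw [Cl_cons]
    have := ih _ _ (Wt_CC (Fin.last n) j.castSucc h)
    convert this using 2
    ext i
    simp only [Pi.sub_apply, ep, Fin.castSucc_ne_last, if_false, Fin.castSucc_inj, List.count_cons,
      beq_iff_eq, eq_comm (a := j)]
    split_ifs <;> push_cast <;> ring

lemma cyc1 [CharZero k] (c : KR k (n+1)) (hc : dK c = 0) (L : List (Fin n)) :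
    dK (prj (Cl L c)) = 0 := by
  rw [← prj_dK, dK_Cl, hc]; simp

lemma cyc2 [CharZero k] (c : KR k (n+1)) (hc : dK c = 0) (L : List (Fin n))
    (h : ∀ L' : List (Fin n), L'.length = L.length + 1 → prj (Cl L' c) = 0) :
    dK (prj (Cl L (PP (Fin.last n) c))) = 0 := by
  have h1 := PP_dK (Fin.last n) c
  rw [hc, map_zero] at h1
  have h2 : dK (PP (Fin.last n) c) = - ∑ j, xx j * CC (Fin.last n) j c :=
    eq_neg_of_add_eq_zero_left h1.symm
  rw [← prj_dK, dK_Cl, h2, Fin.sum_univ_castSucc]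
  simp only [map_neg, map_add, map_sum, map_smul, Cl_xx, map_mul, prj_xl, zero_mul, add_zero]
  rw [Finset.sum_eq_zero]
  · simp
  · intro j _
    rw [← Cl_cons, h _ (by simp), mul_zero]

theorem mid [CharZero k] {l : Fin (n+1) → ℤ}
    (hb : Bad (LinearMap.range (dK : KR k (n+1) →ₗ[k] KR k (n+1))) l) (m : ℕ)
    (hm : l (Fin.last n) = m) : ∃ L : List (Fin n), L.Nodup ∧ (L.length = m ∨ L.length + 1 = m) ∧
      Bad (LinearMap.range (dK : KR k n →ₗ[k] KR k n)) (fun i => l i.castSucc - L.count i) := by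
  by_contra hno
  have hno' : ∀ L : List (Fin n), L.Nodup → (L.length = m ∨ L.length + 1 = m) →
      ∀ v : KR k n, v ∈ Wt (fun i => l i.castSucc - (L.count i : ℤ)) → dK v = 0 → ∃ w, dK w = v := by
    intro L h1 h2 v h3 h4
    by_contra h5
    exact hno ⟨L, h1, h2, v, h3, h4, h5⟩
  obtain ⟨c, hc, hd, hq⟩ := hb
  have hE : ∀ v ∈ (Wt l : Submodule k (KR k (n+1))), ee (Fin.last n) (Fin.last n) v = (m : k) • v := by
    intro v hv; rw [hv, hm]; simp
  have s1 : c ∈ LinearMap.range (dK : KR k (n+1) →ₗ[k] KR k (n+1)) ⊔ NN := by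
    refine taylor m c _ (hE c hc) (JJ_le_NN.trans le_sup_right) ?_ ?_
    · intro L hL
      by_cases hn : L.Nodup
      · obtain ⟨w, hw⟩ := hno' L hn (Or.inl hL) _ (Wt_prjCl L l c hc) (cyc1 c hd L)
        rw [← hw, inc_dK]
        obtain ⟨w', r, h⟩ := yl_dK L (inc w)
        rw [h]
        exact Submodule.add_mem_sup ⟨_, rfl⟩ ⟨r, 0, by simp⟩
      · rw [yl_dup L hn, zero_mul]; exact zero_mem _
    · intro L hL
      exact Submodule.mem_sup_right ⟨_, 0, by simp; rfl⟩
  obtain ⟨_, ⟨w, rfl⟩, ν, hν, hcw⟩ := Submodule.mem_sup.1 s1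
  obtain ⟨w1, hw1, hN⟩ := Wt_bdry_comp NN (fun i u => NN_ee i u) hc (w := w) (by
    rw [← hcw]; simpa using hν)
  set c2 := c - dK w1 with hc2
  have hc2W : c2 ∈ Wt l := sub_mem hc (Wt_dK hw1)
  have hc2d : dK c2 = 0 := by rw [hc2, map_sub, hd, dK_dK, sub_zero]
  have hk : ∀ L, prj (Cl L c2) = 0 := fun L => prj_NN _ (Cl_NN _ _ hN)
  have s2 : c2 ∈ LinearMap.range (dK : KR k (n+1) →ₗ[k] KR k (n+1)) ⊔ JJ := by
    refine taylor m c2 _ (hE c2 hc2W) le_sup_right ?_ ?_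
    · intro L hL
      rw [hk, map_zero, mul_zero]; exact zero_mem _
    · intro L hL
      by_cases hn : L.Nodup
      · have hW := Wt_prjCl L _ _ (Wt_PP (Fin.last n) hc2W)
        simp only [Pi.sub_apply, ep, Fin.castSucc_ne_last, if_false, sub_zero] at hW
        obtain ⟨w, hw⟩ := hno' L hn (Or.inr hL) _ hW (cyc2 c2 hc2d L fun L' _ => hk L')
        rw [← hw, inc_dK]
        obtain ⟨w', r, h⟩ := yl_dK L (inc w)
        rw [h, mul_add, ← dK_xx]
        exact Submodule.add_mem_sup ⟨_, rfl⟩ ⟨r, 0, by simp⟩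
      · rw [yl_dup L hn, zero_mul, mul_zero]; exact zero_mem _
  obtain ⟨_, ⟨w2, rfl⟩, j, hj, hjw⟩ := Submodule.mem_sup.1 s2
  obtain ⟨w3, hw3⟩ := JJ_cycle j hj (by
    rw [← hjw, map_add, dK_dK, zero_add] at hc2d; exact hc2d)
  apply hq
  refine ⟨w1 + w2 + w3, ?_⟩
  rw [map_add, map_add, ← hw3, add_assoc, hjw, hc2]; abel

lemma sum_ge (T : Finset (Fin n)) : (T.card : ℤ) * (T.card - 1) ≤ 2 * ∑ i ∈ T, ((i : ℕ) : ℤ) := by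
  induction T using Finset.induction_on_max with
  | empty => simp
  | insert a s hs ih =>
    have ha : a ∉ s := fun h => lt_irrefl _ (hs a h)
    rw [Finset.card_insert_of_notMem ha, Finset.sum_insert ha]
    have hcard : s.card ≤ (a : ℕ) := by
      have : s ⊆ Finset.Iio a := fun x hx => Finset.mem_Iio.2 (hs x hx)
      simpa using Finset.card_le_card this
    have : (s.card : ℤ) ≤ ((a : ℕ) : ℤ) := by exact_mod_cast hcard
    push_cast
    nlinarith

lemma sum_ite_memT (T : Finset (Fin n)) (f : Fin n → ℤ) :
    ∑ i ∈ T, f i = ∑ i, if i ∈ T then f i else 0 := by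
  rw [← Finset.sum_filter]; congr 1; ext; simp

theorem mid_num [CharZero k] {l : Fin (n+1) → ℤ}
    (hb : Bad (LinearMap.range (dK : KR k (n+1) →ₗ[k] KR k (n+1))) l)
    (h1 : 1 ≤ l (Fin.last n)) (h2 : ∀ i, l i ≤ n) : Ct l < 0 := by
  obtain ⟨m, hm⟩ := Int.eq_ofNat_of_zero_le (show 0 ≤ l (Fin.last n) by omega)
  obtain ⟨L, hL, hlen, hbad⟩ := mid hb m hm
  obtain ⟨_, _, _, hC⟩ := lemmaA' (LinearMap.range (dK : KR k n →ₗ[k] KR k n))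
    (fun u => ⟨u, rfl⟩) range_stab hbad
  set T := L.toFinset with hT
  have hcard : T.card = L.length := List.toFinset_card_of_nodup hL
  have hcount : ∀ i, (L.count i : ℤ) = if i ∈ T then 1 else 0 := by
    intro i
    by_cases h : i ∈ L
    · simp [hT, h, List.count_eq_one_of_mem hL h]
    · simp [hT, h, List.count_eq_zero_of_not_mem h]
  have e1 : Ct l = Ct (fun i : Fin n => l i.castSucc - (L.count i : ℤ))
      + ∑ i ∈ T, 2 * (l i.castSucc - 1 - (i : ℕ)) + m * (m - 2 * n - 1) := by
    rw [Ct, Fin.sum_univ_castSucc, hm, Ct, sum_ite_memT T, ← Finset.sum_add_distrib]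
    simp only [Fin.val_castSucc, Fin.val_last]
    congr 1
    refine Finset.sum_congr rfl fun i _ => ?_
    rw [hcount]
    split_ifs <;> ring
  have e2 : ∑ i ∈ T, 2 * (l i.castSucc - 1 - (i : ℕ)) ≤ ∑ i ∈ T, 2 * ((n : ℤ) - 1 - (i : ℕ)) :=
    Finset.sum_le_sum fun i _ => by have := h2 i.castSucc; omega
  have e3 : ∑ i ∈ T, 2 * ((n : ℤ) - 1 - (i : ℕ)) = 2 * T.card * ((n : ℤ) - 1) - 2 * ∑ i ∈ T, ((i : ℕ) : ℤ) := by
    rw [← Finset.mul_sum, Finset.sum_sub_distrib, Finset.sum_const]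
    simp; ring
  have e4 := sum_ge T
  have hmn : (m : ℤ) ≤ n := by rw [← hm]; exact h2 _
  have hm1 : 1 ≤ (m : ℤ) := by omega
  rw [hcard] at e3 e4
  rcases hlen with h | h
  · rw [h] at e3 e4
    nlinarith
  · have : (L.length : ℤ) = m - 1 := by omega
    rw [this] at e3 e4
    nlinarith

def tm : S k n →ₗ[k] ExteriorAlgebra k (S2 k n) →ₗ[k] KR k n :=
  (TensorProduct.mk k (S k n) (ExteriorAlgebra k (S2 k n)) :
    S k n →ₗ[k] ExteriorAlgebra k (S2 k n) →ₗ[k] KK k n)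

lemma tm_mul (f g : S k n) (v w : ExteriorAlgebra k (S2 k n)) :
    tm f v * tm g w = tm (f * g) (v * w) :=
  Algebra.TensorProduct.tmul_mul_tmul f g v w
lemma tm_one : tm (1 : S k n) (1 : ExteriorAlgebra k (S2 k n)) = 1 := rfl
lemma tm_X (i : Fin n) : tm (X i : S k n) (1 : ExteriorAlgebra k (S2 k n)) = xx i := rfl
lemma tm_q (i j : Fin n) : tm (1 : S k n) (ExteriorAlgebra.ι k (q i j)) = yy i j := rfl

lemma dK_poly [CharZero k] (f : S k n) (u : KR k n) :
    dK (tm f 1 * u) = tm f 1 * dK u := by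
  induction f using MvPolynomial.induction_on generalizing u with
  | C a =>
    have h : (C a : S k n) = a • 1 := by rw [smul_eq_C_mul, mul_one]
    rw [h, map_smul, LinearMap.smul_apply, tm_one]; simp
  | add p r hp hr =>
    rw [map_add, LinearMap.add_apply, add_mul, add_mul, map_add, hp, hr]
  | mul_X p i hp =>
    have h : tm (p * X i) (1 : ExteriorAlgebra k (S2 k n)) = tm p 1 * xx i := by
      rw [← tm_X, tm_mul, mul_one]
    rw [h, mul_assoc, hp, dK_xx, mul_assoc]

lemma dK_step [CharZero k] (f : S k n) (m : S2 k n) (w : ExteriorAlgebra k (S2 k n)) :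
    dK (tm f (ExteriorAlgebra.ι k m * w)) = tm (f * (m : S k n)) w
        - tm 1 (ExteriorAlgebra.ι k m) * dK (tm f w) := by
  have hm : m ∈ Submodule.span k (Set.range fun p : Fin n × Fin n => (q p.1 p.2 : S2 k n)) := by
    rw [span_q]; trivial
  induction hm using Submodule.span_induction with
  | mem x hx' =>
    obtain ⟨⟨i, j⟩, rfl⟩ := hx'
    have h1 : tm f (ExteriorAlgebra.ι k (q i j) * w) = yy i j * tm f w := by
      rw [← tm_q, tm_mul, one_mul]
    have h2 : tm (f * ((q i j : S2 k n) : S k n)) w = xx i * (xx j * tm f w) := by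
      rw [← tm_X, ← tm_X, tm_mul, tm_mul, one_mul, one_mul]
      congr 2
      simp only [q, mulW, xv]; ring
    rw [tm_q, h1, h2, dK_yy]
  | zero => simp
  | add a b _ _ ha hb =>
    simp only [map_add, add_mul, mul_add, Submodule.coe_add, LinearMap.add_apply, ha, hb]; abel
  | smul c a _ ha =>
    simp only [map_smul, smul_mul_assoc, mul_smul_comm, Submodule.coe_smul, LinearMap.smul_apply, ha,
      smul_sub]

lemma dK_tm_one [CharZero k] (f : S k n) : dK (tm f (1 : ExteriorAlgebra k (S2 k n))) = 0 := by
  have := dK_poly f 1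
  rwa [mul_one, dK_one, mul_zero] at this

theorem dK_wedge [CharZero k] (t : ℕ) : ∀ (f : S k n) (m : Fin (t+1) → S2 k n),
    dK (tm f (ExteriorAlgebra.ιMulti k (t+1) m)) = ∑ j : Fin (t+1), ((-1:ℤ)^(j:ℕ)) •
      tm (f * (m j : S k n)) (ExteriorAlgebra.ιMulti k t (fun l => m (j.succAbove l))) := by
  induction t with
  | zero =>
    intro f m
    rw [ExteriorAlgebra.ιMulti_succ_apply, dK_step]
    simp [dK_tm_one]
  | succ t ih =>
    intro f m
    rw [ExteriorAlgebra.ιMulti_succ_apply, dK_step, ih, sub_eq_add_neg,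
      Finset.mul_sum, ← Finset.sum_neg_distrib]
    refine Eq.trans ?_ (Fin.sum_univ_succ _).symm
    congr 1
    · simp; rfl
    · refine Finset.sum_congr rfl fun j _ => ?_
      rw [ExteriorAlgebra.ιMulti_succ_apply, mul_smul_comm, tm_mul, one_mul, Fin.val_succ, pow_succ]
      rw [mul_neg_one, neg_smul]
      simp [Matrix.vecTail, Function.comp_def]

def ZZ (i : Fin n) : KR k n := (Zel i : KK k n)

lemma ZZ_tm (i : Fin n) : (ZZ i : KR k n) = ∑ j : Fin ((i:ℕ)+1), ((-1:ℤ)^(j:ℕ)) •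
    tm (X (Fin.castLE i.isLt j)) (ExteriorAlgebra.ιMulti k (i:ℕ)
          (fun l : Fin (i:ℕ) => q (Fin.castLE i.isLt (j.succAbove l)) i)) := rfl

lemma dK_ZZ [CharZero k] (i : Fin n) : dK (ZZ i : KR k n) = 0 := by
  have h : xx i * ZZ i = (dK (tm 1 (ExteriorAlgebra.ιMulti k ((i:ℕ)+1)
      (fun l : Fin ((i:ℕ)+1) => q (Fin.castLE i.isLt l) i))) : KR k n) := by
    rw [dK_wedge, ZZ_tm, Finset.mul_sum]
    refine Finset.sum_congr rfl fun j _ => ?_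
    rw [mul_smul_comm, ← tm_X, tm_mul, one_mul, one_mul]
    congr 3
    simp only [q, mulW, xv]; ring
  apply xx_inj i
  rw [← dK_xx, h, dK_dK]

lemma tm_im (f : S k n) (t : ℕ) (a b : Fin t → Fin n) :
    tm f (ExteriorAlgebra.ιMulti k t (fun l => q (a l) (b l))) =
      tm f 1 * (List.ofFn fun l => (yy (a l) (b l) : KR k n)).prod := by
  induction t generalizing f with
  | zero => simp
  | succ t ih =>
    rw [ExteriorAlgebra.ιMulti_succ_apply, List.ofFn_succ, List.prod_cons]
    have := ih 1 (fun l => a l.succ) (fun l => b l.succ)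
    rw [tm_one, one_mul] at this
    rw [← this, ← tm_q, tm_mul, tm_mul, one_mul, one_mul, mul_one]
    rfl

lemma ZZ_eq (i : Fin n) : (ZZ i : KR k n) = ∑ j : Fin ((i:ℕ)+1), ((-1:ℤ)^(j:ℕ)) •
    (xx (Fin.castLE i.isLt j) * (List.ofFn
          (fun l : Fin (i:ℕ) => (yy (Fin.castLE i.isLt (j.succAbove l)) i : KR k n))).prod) := by
  rw [ZZ_tm]
  refine Finset.sum_congr rfl fun j _ => ?_
  rw [tm_im, tm_X]

lemma inc_ZZ (i : Fin n) : inc (ZZ i : KR k n) = ZZ i.castSucc := by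
  rw [ZZ_eq, ZZ_eq, map_sum]
  refine Finset.sum_congr rfl fun j _ => ?_
  rw [map_zsmul, map_mul, inc_xx, map_list_prod, List.map_ofFn]
  congr 4
  ext l
  exact inc_yy (k := k) (Fin.castLE i.isLt (j.succAbove l)) i

lemma JJ_prod (l : List (KR k (n+1))) (a : KR k (n+1)) (ha : a ∈ JJ) (h : a ∈ l) : l.prod ∈ JJ := by
  induction l with
  | nil => simp at h
  | cons b l ih =>
    rw [List.prod_cons]
    rcases List.mem_cons.1 h with rfl | h
    · exact JJ_right _ _ ha
    · exact JJ_left _ _ (ih h)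

lemma yl_eq (l : List (Fin n)) :
    (yl l : KR k (n+1)) = (l.map fun j : Fin n => yy j.castSucc (Fin.last n)).prod := by
  induction l with
  | nil => rfl
  | cons j l ih => rw [yl_cons, ih, List.map_cons, List.prod_cons]

lemma ZZ_last : ∃ e : ℤ, (e = 1 ∨ e = -1) ∧ (ZZ (Fin.last n) : KR k (n+1)) -
    e • (xx (Fin.last n) * yl (List.finRange n)) ∈ JJ := by
  refine ⟨(-1)^n, neg_one_pow_eq_or ℤ n, ?_⟩
  rw [ZZ_eq]
  change (∑ j : Fin (n+1), ((-1:ℤ)^(j:ℕ)) •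
    (xx (Fin.castLE le_rfl j) * (List.ofFn
          (fun l : Fin n => (yy (Fin.castLE le_rfl (j.succAbove l)) (Fin.last n) : KR k (n+1)))).prod)) - _ ∈ _
  rw [Fin.sum_univ_castSucc]
  have h : (xx (Fin.castLE le_rfl (Fin.last n)) * (List.ofFn
          (fun l : Fin n => (yy (Fin.castLE le_rfl ((Fin.last n).succAbove l)) (Fin.last n) : KR k (n+1)))).prod)
          = xx (Fin.last n) * yl (List.finRange n) := by
    rw [yl_eq, ← List.ofFn_eq_map]
    simp
  rw [h, Fin.val_last, add_sub_cancel_right]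
  refine Submodule.sum_mem _ fun j _ => ?_
  rw [← Int.cast_smul_eq_zsmul k]
  refine Submodule.smul_mem _ _ (JJ_left _ _ (JJ_prod _ (yy (Fin.last n) (Fin.last n)) ⟨0, 1, by simp⟩ ?_))
  rw [List.mem_ofFn]
  obtain ⟨l, hl⟩ := Fin.exists_succAbove_eq (Fin.castSucc_ne_last j).symm
  exact ⟨l, by rw [hl]; rfl⟩

lemma yl_perm {l l' : List (Fin n)} (h : l.Perm l') : ∃ e : k, (yl l : KR k (n+1)) = e • yl l' := by
  induction h with
  | nil => exact ⟨1, by simp⟩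
  | cons x _ ih =>
    obtain ⟨e, he⟩ := ih
    exact ⟨e, by rw [yl_cons, he, yl_cons, mul_smul_comm]⟩
  | swap x y l => exact ⟨-1, by simp only [yl_cons]; rw [yy_lc]; simp⟩
  | trans _ _ h1 h2 =>
    obtain ⟨e, he⟩ := h1
    obtain ⟨f, hf⟩ := h2
    exact ⟨e * f, by rw [he, hf, smul_smul]⟩

/-- sign commutation -/
def Cm (e : k) (v : KR k n) : Prop := ∀ i j, yy i j * v = e • (v * yy i j)

lemma Cm_mul {e f : k} {v w : KR k n} (hv : Cm e v) (hw : Cm f w) : Cm (e * f) (v * w) := by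
  intro i j
  rw [← mul_assoc, hv, smul_mul_assoc, mul_assoc, hw, mul_smul_comm, smul_smul, mul_assoc]

lemma Cm_one : Cm (1 : k) (1 : KR k n) := fun i j => by simp

lemma Cm_yprod (t : ℕ) (a b : Fin t → Fin n) :
    Cm ((-1 : k)^t) (List.ofFn fun l => (yy (a l) (b l) : KR k n)).prod := by
  induction t with
  | zero => simpa using Cm_one
  | succ t ih =>
    rw [List.ofFn_succ, List.prod_cons, pow_succ']
    exact Cm_mul (fun i j => by rw [yy_yy]; simp) (ih _ _)

lemma Cm_ZZ (i : Fin n) : Cm ((-1:k)^(i:ℕ)) (ZZ i : KR k n) := by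
  intro a b
  rw [ZZ_eq, Finset.mul_sum, Finset.sum_mul, Finset.smul_sum]
  refine Finset.sum_congr rfl fun j _ => ?_
  rw [mul_smul_comm, yx_lc, Cm_yprod]
  simp only [mul_smul_comm, smul_mul_assoc, mul_assoc]
  rw [smul_comm]

lemma Cm_prod (l : List (Fin n)) : ∃ e : k, Cm e ((l.map fun i => (ZZ i : KR k n)).prod) := by
  induction l with
  | nil => exact ⟨1, Cm_one⟩
  | cons i l ih => obtain ⟨e, he⟩ := ih; exact ⟨_, Cm_mul (Cm_ZZ i) he⟩

lemma Cm_yl {e : k} {v : KR k (n+1)} (hv : Cm e v) (l : List (Fin n)) :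
    ∃ f : k, yl l * v = f • (v * yl l) := by
  induction l with
  | nil => exact ⟨1, by simp [yl_nil]⟩
  | cons j l ih =>
    obtain ⟨f, hf⟩ := ih
    refine ⟨f * e, ?_⟩
    rw [yl_cons, mul_assoc, hf, mul_smul_comm, ← mul_assoc, hv, smul_mul_assoc, smul_smul, mul_assoc]

lemma xx_central (i : Fin n) (v : KR k n) : v * xx i = xx i * v := by
  induction v using KR_ind with
  | h1 => simp
  | hadd u v hu hv => rw [add_mul, mul_add, hu, hv]
  | hsmul c u hu => rw [smul_mul_assoc, mul_smul_comm, hu]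
  | hx j u hu => rw [mul_assoc, hu, xx_lc]
  | hy a b u hu => rw [mul_assoc, hu, yx_lc]

lemma dK_mul [CharZero k] (u : KR k n) : ∃ u', ∀ v, dK (u * v) = dK u * v + u' * dK v := by
  induction u using KR_ind with
  | h1 => exact ⟨1, fun v => by simp [dK_one]⟩
  | hadd u v hu hv =>
    obtain ⟨a, ha⟩ := hu
    obtain ⟨b, hb⟩ := hv
    exact ⟨a + b, fun v => by rw [add_mul, map_add, ha, hb, map_add, add_mul, add_mul]; abel⟩
  | hsmul c u hu =>
    obtain ⟨a, ha⟩ := hu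
    exact ⟨c • a, fun v => by simp only [smul_mul_assoc, map_smul, ha, smul_add]⟩
  | hx i u hu =>
    obtain ⟨a, ha⟩ := hu
    exact ⟨xx i * a, fun v => by rw [mul_assoc, dK_xx, ha, dK_xx, mul_add, mul_assoc, mul_assoc]⟩
  | hy i j u hu =>
    obtain ⟨a, ha⟩ := hu
    exact ⟨- (yy i j * a), fun v => by
      rw [mul_assoc, dK_yy, ha, dK_yy, mul_add, sub_mul, mul_assoc, mul_assoc, mul_assoc, neg_mul, mul_assoc]
      abel⟩

lemma cyc_mul [CharZero k] {u v : KR k n} (hu : dK u = 0) (hv : dK v = 0) : dK (u * v) = 0 := by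
  obtain ⟨u', h⟩ := dK_mul u
  rw [h, hu, hv]; simp

lemma cyc_prod [CharZero k] (l : List (Fin n)) : dK ((l.map fun i => (ZZ i : KR k n)).prod) = 0 := by
  induction l with
  | nil => exact dK_one
  | cons i l ih => exact cyc_mul (dK_ZZ i) ih

def zp (s : ℕ) (μ : Fin s → Fin n) : KR k n := ((List.finRange s).map (fun l => (ZZ (μ l) : KR k n))).prod

variable (k n) in
def UU : Submodule k (KR k n) := Submodule.span k {v | ∃ (g : GL (Fin n) k) (s : ℕ) (μ : Fin s → Fin n),
  StrictMono μ ∧ v = phi (g : Matrix (Fin n) (Fin n) k) (zp s μ)}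

variable (k n) in
def QQ [CharZero k] : Submodule k (KR k n) := LinearMap.range (dK : KR k n →ₗ[k] KR k n) ⊔ UU k n

lemma zp_map (s : ℕ) (μ : Fin s → Fin n) :
    (zp s μ : KR k n) = (((List.finRange s).map μ).map (fun l => (ZZ l : KR k n))).prod := by
  rw [zp, List.map_map]; rfl

lemma UU_stab : GLstab (UU k n) := by
  intro g u hu
  induction hu using Submodule.span_induction with
  | mem v hv =>
    obtain ⟨g', s, μ, hμ, rfl⟩ := hv
    refine Submodule.subset_span ⟨g' * g, s, μ, hμ, ?_⟩
    rw [phi_phi, Units.val_mul]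
  | zero => rw [map_zero]; exact zero_mem _
  | add a b _ _ ha hb => rw [map_add]; exact add_mem ha hb
  | smul c a _ ha => rw [map_smul]; exact Submodule.smul_mem _ _ ha

lemma QQ_stab [CharZero k] : GLstab (QQ k n) := by
  intro g u hu
  obtain ⟨a, ha, b, hb, rfl⟩ := Submodule.mem_sup.1 hu
  rw [map_add]
  exact Submodule.add_mem_sup (range_stab g a ha) (UU_stab g b hb)

lemma QQ_d [CharZero k] (u : KR k n) : dK u ∈ QQ k n := Submodule.mem_sup_left ⟨u, rfl⟩

lemma UU_cyc [CharZero k] (u : KR k n) (hu : u ∈ UU k n) : dK u = 0 := by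
  have : UU k n ≤ LinearMap.ker (dK : KR k n →ₗ[k] KR k n) := by
    refine Submodule.span_le.2 ?_
    rintro _ ⟨g, s, μ, -, rfl⟩
    change dK _ = 0
    rw [← phi_dK, zp_map, cyc_prod, map_zero]
  exact this hu

lemma QQ_cyc [CharZero k] (u : KR k n) (hu : u ∈ QQ k n) : dK u = 0 := by
  obtain ⟨_, ⟨a, rfl⟩, b, hb, rfl⟩ := Submodule.mem_sup.1 hu
  rw [map_add, dK_dK, UU_cyc b hb, add_zero]

def hM (A : Matrix (Fin n) (Fin n) k) : Matrix (Fin (n+1)) (Fin (n+1)) k := fun a b =>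
  Fin.lastCases (Fin.lastCases 1 (fun _ => 0) b) (fun a' => Fin.lastCases 0 (fun b' => A a' b') b) a

@[simp] lemma hM_cc (A : Matrix (Fin n) (Fin n) k) (a b : Fin n) : hM A a.castSucc b.castSucc = A a b := by simp [hM]
@[simp] lemma hM_cl (A : Matrix (Fin n) (Fin n) k) (a : Fin n) : hM A a.castSucc (Fin.last n) = 0 := by simp [hM]
@[simp] lemma hM_lc (A : Matrix (Fin n) (Fin n) k) (b : Fin n) : hM A (Fin.last n) b.castSucc = 0 := by simp [hM]
@[simp] lemma hM_ll (A : Matrix (Fin n) (Fin n) k) : hM A (Fin.last n) (Fin.last n) = 1 := by simp [hM]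

lemma hM_mul (A B : Matrix (Fin n) (Fin n) k) : hM A * hM B = hM (A * B) := by
  ext a b
  rw [Matrix.mul_apply, Fin.sum_univ_castSucc]
  induction a using Fin.lastCases <;> induction b using Fin.lastCases <;> simp [Matrix.mul_apply]

lemma hM_one : hM (1 : Matrix (Fin n) (Fin n) k) = 1 := by
  ext a b
  induction a using Fin.lastCases <;> induction b using Fin.lastCases <;>
    simp [Matrix.one_apply, Fin.castSucc_ne_last, (Fin.castSucc_ne_last _).symm]

def hG (g : GL (Fin n) k) : GL (Fin (n+1)) k where
  val := hM (g : Matrix (Fin n) (Fin n) k)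
  inv := hM ((g⁻¹ : GL (Fin n) k) : Matrix (Fin n) (Fin n) k)
  val_inv := by rw [hM_mul, ← Units.val_mul, mul_inv_cancel, Units.val_one, hM_one]
  inv_val := by rw [hM_mul, ← Units.val_mul, inv_mul_cancel, Units.val_one, hM_one]

lemma iM_hM (A : Matrix (Fin n) (Fin n) k) : (iM : Matrix (Fin n) (Fin (n+1)) k) * hM A = A * (iM : Matrix (Fin n) (Fin (n+1)) k) := by
  ext a b
  rw [Matrix.mul_apply, Matrix.mul_apply]
  induction b using Fin.lastCases <;>
    simp [Matrix.mul_apply, iM, Fin.castSucc_ne_last, (Fin.castSucc_ne_last _).symm]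

lemma inc_phi (A : Matrix (Fin n) (Fin n) k) (u : KR k n) : inc (phi A u) = phi (hM A) (inc u) := by
  rw [inc, phi_phi, phi_phi]
  exact congrArg (fun M => phi M u) (iM_hM A).symm

lemma inc_zp (s : ℕ) (μ : Fin s → Fin n) : inc (zp s μ : KR k n) = zp s (fun l => (μ l).castSucc) := by
  rw [zp, map_list_prod, List.map_map, zp]
  congr 2
  ext l
  exact inc_ZZ _

lemma zp_snoc (s : ℕ) (μ : Fin s → Fin n) (a : Fin n) :
    (zp (s+1) (Fin.snoc μ a : Fin (s+1) → Fin n) : KR k n) = zp s μ * ZZ a := by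
  rw [zp, List.finRange_succ_last]
  simp [zp, Function.comp_def]

lemma snoc_mono (s : ℕ) (μ : Fin s → Fin n) (h : StrictMono μ) :
    StrictMono (Fin.snoc (fun l => (μ l).castSucc) (Fin.last n) : Fin (s+1) → Fin (n+1)) := by
  intro a b hab
  induction b using Fin.lastCases with
  | last =>
    induction a using Fin.lastCases with
    | last => simp at hab
    | cast a => simp [Fin.castSucc_lt_last]
  | cast b =>
    induction a using Fin.lastCases with
    | last => exact absurd hab (not_lt.2 (Fin.le_last _))
    | cast a => simpa using h (by simpa using hab)

lemma inc_UU (u : KR k n) (hu : u ∈ UU k n) : inc u ∈ UU k (n+1) := by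
  induction hu using Submodule.span_induction with
  | mem v hv =>
    obtain ⟨g, s, μ, hμ, rfl⟩ := hv
    rw [inc_phi, inc_zp]
    exact Submodule.subset_span ⟨hG g, s, _, fun a b h => by simpa using hμ h, rfl⟩
  | zero => rw [map_zero]; exact zero_mem _
  | add a b _ _ ha hb => rw [map_add]; exact add_mem ha hb
  | smul c a _ ha => rw [map_smul]; exact Submodule.smul_mem _ _ ha

lemma phi_hM_x (A : Matrix (Fin n) (Fin n) k) : phi (hM A) (xx (Fin.last n)) = (xx (Fin.last n) : KR k (n+1)) := by
  rw [phi_xx, Fin.sum_univ_castSucc]; simp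

lemma phi_hM_y (A : Matrix (Fin n) (Fin n) k) (i : Fin n) : phi (hM A) (yy i.castSucc (Fin.last n)) =
    ∑ a, A i a • (yy a.castSucc (Fin.last n) : KR k (n+1)) := by
  rw [phi_yy, Fin.sum_univ_castSucc]; simp [Fin.sum_univ_castSucc]

lemma phi_hM_yl (A : Matrix (Fin n) (Fin n) k) : phi (hM A) (yl (List.finRange n)) =
    A.det • (yl (List.finRange n) : KR k (n+1)) := by
  let lin : (Fin n → k) →ₗ[k] S2 k (n+1) := Fintype.linearCombination k (fun a : Fin n => q a.castSucc (Fin.last n))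
  let F : (Fin n → k) [⋀^Fin n]→ₗ[k] KR k (n+1) :=
    (tm (1 : S k (n+1))).compAlternatingMap ((ExteriorAlgebra.ιMulti k n).compLinearMap lin)
  have hF : ∀ v : Fin n → Fin n → k, F v =
      (List.ofFn fun i => ∑ a, v i a • (yy a.castSucc (Fin.last n) : KR k (n+1))).prod := by
    have gen : ∀ (t : ℕ) (v : Fin t → Fin n → k), tm (1 : S k (n+1)) (ExteriorAlgebra.ιMulti k t (fun i => lin (v i))) =
        (List.ofFn fun i => ∑ a, v i a • (yy a.castSucc (Fin.last n) : KR k (n+1))).prod := by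
      intro t
      induction t with
      | zero => intro v; simp [tm_one]
      | succ t ih =>
        intro v
        rw [ExteriorAlgebra.ιMulti_succ_apply, List.ofFn_succ, List.prod_cons, ← ih]
        have : ∑ a, v 0 a • (yy a.castSucc (Fin.last n) : KR k (n+1)) = tm 1 (ExteriorAlgebra.ι k (lin (v 0))) := by
          simp only [lin, Fintype.linearCombination_apply, map_sum, map_smul, tm_q]
        rw [this, tm_mul, one_mul]
        rfl
    exact gen n
  let e := Pi.basisFun k (Fin n)
  have h1 : F = (LinearMap.toSpanSingleton k _ (F e)).compAlternatingMap e.det := by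
    refine Module.Basis.ext_alternating e fun i h => ?_
    let σ : Equiv.Perm (Fin n) := Equiv.ofBijective i (Finite.injective_iff_bijective.1 h)
    change F (e ∘ σ) = ((LinearMap.toSpanSingleton k _ (F e)).compAlternatingMap e.det) (e ∘ σ)
    rw [AlternatingMap.map_perm, AlternatingMap.map_perm]
    simp [Module.Basis.det_self]
  have h2 : F (fun i j => A i j) = A.det • F e := by
    conv_lhs => rw [h1]
    rw [LinearMap.compAlternatingMap_apply, Pi.basisFun_det_apply]
    rfl
  rw [hF, hF] at h2
  rw [yl_eq, map_list_prod, List.map_map, ← List.ofFn_eq_map, ← List.ofFn_eq_map]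
  have ha : (phi (hM A) ∘ fun j : Fin n => (yy j.castSucc (Fin.last n) : KR k (n+1))) =
      fun i => ∑ a, A i a • (yy a.castSucc (Fin.last n) : KR k (n+1)) := funext fun i => phi_hM_y A i
  have hb : (fun j : Fin n => (yy j.castSucc (Fin.last n) : KR k (n+1))) =
      fun i => ∑ a, e i a • (yy a.castSucc (Fin.last n) : KR k (n+1)) := by
    ext i; simp [e, Pi.single_apply]
  rw [ha, h2, ← hb]

lemma top_UU (u : KR k n) (hu : u ∈ UU k n) :
    xx (Fin.last n) * (yl (List.finRange n) * inc u) ∈ UU k (n+1) ⊔ JJ := by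
  set Y : KR k (n+1) := yl (List.finRange n) with hY
  induction hu using Submodule.span_induction with
  | mem v hv =>
    obtain ⟨g, s, μ, hμ, rfl⟩ := hv
    have hdet : (g : Matrix (Fin n) (Fin n) k).det ≠ 0 :=
      ((Matrix.isUnit_iff_isUnit_det _).1 g.isUnit).ne_zero
    rw [inc_phi, inc_zp]
    set V : KR k (n+1) := zp s (fun l => (μ l).castSucc) with hV
    have h1 : xx (Fin.last n) * (Y * phi (hM (g : Matrix (Fin n) (Fin n) k)) V) =
        ((g : Matrix (Fin n) (Fin n) k).det)⁻¹ •
          phi (hM (g : Matrix (Fin n) (Fin n) k)) (xx (Fin.last n) * (Y * V)) := by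
      rw [map_mul, map_mul, phi_hM_x, hY, phi_hM_yl, smul_mul_assoc, mul_smul_comm, smul_smul,
        inv_mul_cancel₀ hdet, one_smul]
    rw [h1]
    refine Submodule.smul_mem _ _ ?_
    obtain ⟨e, he⟩ : ∃ e : k, Cm e V := by rw [hV, zp_map]; exact Cm_prod _
    obtain ⟨f, hf⟩ := Cm_yl he (List.finRange n)
    rw [← hY] at hf
    obtain ⟨ε, hε, hZ⟩ := ZZ_last (k := k) (n := n)
    rw [← hY] at hZ
    have h2 : xx (Fin.last n) * (Y * V) = (f * ε) • (V * ZZ (Fin.last n))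
        - (f * ε) • (V * (ZZ (Fin.last n) - ε • (xx (Fin.last n) * Y))) := by
      have hε2 : (ε : k) * ε = 1 := by rcases hε with rfl | rfl <;> simp
      rw [hf, mul_smul_comm, ← mul_assoc (xx (Fin.last n)) V Y, ← xx_central, mul_assoc V, mul_sub, smul_sub, sub_sub_cancel, ← Int.cast_smul_eq_zsmul k,
        mul_smul_comm, smul_smul, mul_assoc, hε2, mul_one]
    rw [h2, map_sub, map_smul, map_smul]
    refine sub_mem (Submodule.mem_sup_left (Submodule.smul_mem _ _ ?_))
      (Submodule.mem_sup_right (Submodule.smul_mem _ _ ?_))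
    · refine Submodule.subset_span ⟨hG g, s+1, _, snoc_mono s μ hμ, ?_⟩
      rw [zp_snoc]; rfl
    · rw [map_mul]
      refine JJ_left _ _ ?_
      obtain ⟨a, b, hab⟩ := hZ
      rw [hab]
      refine ⟨phi (hM (g : Matrix (Fin n) (Fin n) k)) a, phi (hM (g : Matrix (Fin n) (Fin n) k)) b, ?_⟩
      have hz : phi (hM (g : Matrix (Fin n) (Fin n) k)) (yy (Fin.last n) (Fin.last n)) =
          (yy (Fin.last n) (Fin.last n) : KR k (n+1)) := by
        rw [phi_yy, Fin.sum_univ_castSucc]; simp [Fin.sum_univ_castSucc]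
      rw [map_add, map_mul, map_mul, map_mul, phi_hM_x, hz]
  | zero => rw [map_zero, mul_zero, mul_zero]; exact zero_mem _
  | add a b _ _ ha hb => rw [map_add, mul_add, mul_add]; exact add_mem ha hb
  | smul c a _ ha => rw [map_smul, mul_smul_comm, mul_smul_comm]; exact Submodule.smul_mem _ _ ha

lemma big_case [CharZero k] (ih : ∀ c : KR k n, dK c = 0 → c ∈ QQ k n) {l : Fin (n+1) → ℤ}
    (hl : (n : ℤ) + 1 ≤ l (Fin.last n)) : ¬ Bad (QQ k (n+1)) l := by
  rintro ⟨c, hc, hd, hq⟩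
  obtain ⟨m, hm⟩ := Int.eq_ofNat_of_zero_le (show 0 ≤ l (Fin.last n) by omega)
  have hmn : n + 1 ≤ m := by omega
  have hnd : ∀ L : List (Fin n), L.Nodup → L.length ≤ n := fun L hL => by
    simpa using hL.length_le_card
  have hJ : (JJ : Submodule k (KR k (n+1))) ≤ QQ k (n+1) ⊔ JJ := le_sup_right
  have key : c ∈ QQ k (n+1) ⊔ JJ := by
    refine taylor m c _ ?_ hJ ?_ ?_
    · rw [hc, hm]; simp
    · intro L hL
      rw [yl_dup L (fun h => by have := hnd L h; omega), zero_mul]; exact zero_mem _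
    · intro L hL
      by_cases hn : L.Nodup
      · have hLn : L.length = n := by have := hnd L hn; omega
        have hcy := cyc2 c hd L (fun L' hL' => by
          rw [Cl_dup L' (fun h => by have := hnd L' h; omega), map_zero])
        set κ := prj (Cl L (PP (Fin.last n) c)) with hκ
        obtain ⟨_, ⟨w, rfl⟩, u, hu, hκu⟩ := Submodule.mem_sup.1 (ih κ hcy)
        rw [← hκu, map_add, mul_add, mul_add]
        refine add_mem ?_ ?_
        · rw [inc_dK]
          obtain ⟨w', r, h⟩ := yl_dK L (inc w)
          rw [h, mul_add, ← dK_xx]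
          exact Submodule.add_mem_sup (QQ_d _) ⟨r, 0, by simp⟩
        · have hp : L.Perm (List.finRange n) := by
            refine List.perm_of_nodup_nodup_toFinset_eq hn (List.nodup_finRange n) ?_
            rw [Finset.eq_univ_of_card L.toFinset (by
              rw [List.toFinset_card_of_nodup hn, hLn, Fintype.card_fin])]
            ext; simp
          obtain ⟨e, he⟩ := yl_perm (k := k) hp
          rw [he, smul_mul_assoc, mul_smul_comm]
          refine Submodule.smul_mem _ _ ?_
          exact sup_le_sup_right (le_sup_right : UU k (n+1) ≤ QQ k (n+1)) _ (top_UU u hu)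
      · rw [yl_dup L hn, zero_mul, mul_zero]; exact zero_mem _
  obtain ⟨a, ha, j, hj, hcj⟩ := Submodule.mem_sup.1 key
  obtain ⟨w, hw⟩ := JJ_cycle j hj (by
    rw [← hcj, map_add, QQ_cyc a ha, zero_add] at hd; exact hd)
  apply hq
  rw [← hcj, hw]
  exact add_mem ha (QQ_d w)

lemma zero_case [CharZero k] (ih : ∀ c : KR k n, dK c = 0 → c ∈ QQ k n) {l : Fin (n+1) → ℤ}
    (hl : l (Fin.last n) = 0) : ¬ Bad (QQ k (n+1)) l := by
  rintro ⟨c, hc, hd, hq⟩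
  have h := eq_inc_of_zero c (by rw [hc, hl]; simp)
  apply hq
  rw [h]
  obtain ⟨_, ⟨w, rfl⟩, u, hu, hκu⟩ := Submodule.mem_sup.1 (ih (prj c) (by rw [← prj_dK, hd, map_zero]))
  rw [← hκu, map_add, inc_dK]
  exact add_mem (QQ_d _) (Submodule.mem_sup_right (inc_UU u hu))

theorem main_gen [CharZero k] (n : ℕ) : ∀ c : KR k n, dK c = 0 → c ∈ QQ k n := by
  induction n with
  | zero =>
    intro c hc
    clear hc
    refine Submodule.mem_sup_right ?_
    induction c using KR_ind with
    | h1 => exact Submodule.subset_span ⟨1, 0, Fin.elim0, fun a => a.elim0, by simp [zp]⟩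
    | hadd u v hu hv => exact add_mem hu hv
    | hsmul c u hu => exact Submodule.smul_mem _ _ hu
    | hx i => exact i.elim0
    | hy i => exact i.elim0
  | succ n ih =>
    intro c hc
    by_contra hq
    obtain ⟨l0, hl0⟩ := exists_bad (QQ k (n+1)) c hc hq
    obtain ⟨l, hl, hC, -⟩ := lemmaA' (QQ k (n+1)) QQ_d QQ_stab hl0
    by_cases hbig : ∃ i, (n : ℤ) + 1 ≤ l i
    · obtain ⟨i, hi⟩ := hbig
      exact big_case ih (by simpa using hi) (bad_perm QQ_stab l (Equiv.swap i (Fin.last n)) hl)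
    · push Not at hbig
      have hnn := hl.nonneg (Fin.last n)
      rcases eq_or_lt_of_le hnn with h0 | h0
      · exact zero_case ih h0.symm hl
      · have := mid_num (k := k) (n := n) (l := l) (by
          obtain ⟨c, h1, h2, h3⟩ := hl
          exact ⟨c, h1, h2, fun h => h3 (Submodule.mem_sup_left h)⟩) h0
          (fun i => by have := hbig i; omega)
        omega

lemma tm_mem (t : ℕ) (f : S k n) (w : ExteriorAlgebra k (S2 k n)) (hw : w ∈ ⋀[k]^t (S2 k n)) :
    (tm f w : KK k n) ∈ Kt k n t :=
  ⟨f ⊗ₜ[k] (⟨w, hw⟩ : ⋀[k]^t (S2 k n)), rfl⟩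

lemma Kt_ind {t : ℕ} {p : KR k n → Prop} (h0 : p 0) (hadd : ∀ u v, p u → p v → p (u + v))
    (hs : ∀ f w, w ∈ ⋀[k]^t (S2 k n) → p (tm f w)) (c : KK k n) (hc : c ∈ Kt k n t) : p c := by
  obtain ⟨z, rfl⟩ := hc
  induction z using TensorProduct.induction_on with
  | zero => rw [map_zero]; exact h0
  | tmul f w => exact hs f w w.2
  | add a b ha hb => rw [map_add]; exact hadd _ _ ha hb

lemma Kt_ind' {t : ℕ} {p : KR k n → Prop} (h0 : p 0) (hadd : ∀ u v, p u → p v → p (u + v))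
    (hs : ∀ f m, p (tm f (ExteriorAlgebra.ιMulti k t m))) (c : KK k n) (hc : c ∈ Kt k n t) : p c := by
  refine Kt_ind h0 hadd ?_ c hc
  intro f w hw
  rw [← ExteriorAlgebra.ιMulti_span_fixedDegree] at hw
  induction hw using Submodule.span_induction generalizing f with
  | mem x hx => obtain ⟨m, rfl⟩ := hx; exact hs f m
  | zero => rw [map_zero]; exact h0
  | add a b _ _ ha hb => rw [map_add]; exact hadd _ _ (ha f) (hb f)
  | smul c a _ ha =>
    have := ha (c • f)
    rw [map_smul, LinearMap.smul_apply] at this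
    rwa [map_smul]

lemma iM_mem (t : ℕ) (m : Fin t → S2 k n) : ExteriorAlgebra.ιMulti k t m ∈ ⋀[k]^t (S2 k n) :=
  ExteriorAlgebra.ιMulti_range k t ⟨m, rfl⟩

lemma Kt_mul {s t : ℕ} (c d : KR k n) (hc : (c : KK k n) ∈ Kt k n s) (hd : (d : KK k n) ∈ Kt k n t) :
    ((c * d : KR k n) : KK k n) ∈ Kt k n (s + t) := by
  refine Kt_ind (p := fun c : KR k n => ((c * d : KR k n) : KK k n) ∈ Kt k n (s + t)) ?_ ?_ ?_ c hc
  · rw [zero_mul]; exact zero_mem _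
  · intro u v hu hv; rw [add_mul]; exact add_mem hu hv
  · intro f w hw
    refine Kt_ind (p := fun d : KR k n => ((tm f w * d : KR k n) : KK k n) ∈ Kt k n (s + t)) ?_ ?_ ?_ d hd
    · rw [mul_zero]; exact zero_mem _
    · intro u v hu hv; rw [mul_add]; exact add_mem hu hv
    · intro g w' hw'
      rw [tm_mul]
      exact tm_mem _ _ _ (SetLike.mul_mem_graded (A := fun i : ℕ => ⋀[k]^i (S2 k n)) hw hw')

lemma Kt_phi {t : ℕ} (A : Matrix (Fin n) (Fin n) k) (c : KR k n) (hc : (c : KK k n) ∈ Kt k n t) :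
    ((phi A c : KR k n) : KK k n) ∈ Kt k n t := by
  refine Kt_ind' (p := fun c : KR k n => ((phi A c : KR k n) : KK k n) ∈ Kt k n t) ?_ ?_ ?_ c hc
  · rw [map_zero]; exact zero_mem _
  · intro u v hu hv; rw [map_add]; exact add_mem hu hv
  · intro f m
    have : phi A (tm f (ExteriorAlgebra.ιMulti k t m)) = tm (substM A f)
        (ExteriorAlgebra.ιMulti k t (fun i => substM2 A (m i))) := by
      change (substM A f) ⊗ₜ[k] (ExteriorAlgebra.map (substM2 A) (ExteriorAlgebra.ιMulti k t m)) = _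
      rw [ExteriorAlgebra.map_apply_ιMulti]; rfl
    rw [this]
    exact tm_mem _ _ _ (iM_mem _ _)

lemma Kt_ZZ (i : Fin n) : ((ZZ i : KR k n) : KK k n) ∈ Kt k n i := by
  rw [ZZ_tm]
  refine Submodule.sum_mem (Kt k n i) fun j _ => ?_
  exact zsmul_mem (tm_mem _ _ _ (iM_mem _ _)) _

lemma Kt_zp (s : ℕ) (μ : Fin s → Fin n) : ((zp s μ : KR k n) : KK k n) ∈ Kt k n (∑ l, (μ l : ℕ)) := by
  have h : ∀ L : List (Fin n), (((L.map fun i => (ZZ i : KR k n)).prod : KR k n) : KK k n) ∈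
      Kt k n ((L.map (fun i : Fin n => i.val)).sum) := by
    intro L
    induction L with
    | nil => exact tm_mem 0 1 1 (by simp)
    | cons i L ih => exact Kt_mul _ _ (Kt_ZZ i) ih
  have h2 := h ((List.finRange s).map μ)
  rw [← zp_map, List.map_map] at h2
  convert h2 using 2
  rw [← List.ofFn_eq_map, List.sum_ofFn]; rfl

/-- projection to degree t -/
def prD (t : ℕ) : KR k n →ₗ[k] KR k n :=
  (LinearMap.lTensor (S k n) (GradedAlgebra.proj (fun i : ℕ => ⋀[k]^i (S2 k n)) t) :
    KK k n →ₗ[k] KK k n)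

lemma prD_tm (t : ℕ) (f : S k n) (w : ExteriorAlgebra k (S2 k n)) :
    prD t (tm f w) = tm f (GradedAlgebra.proj (fun i : ℕ => ⋀[k]^i (S2 k n)) t w) := rfl

lemma prD_same {t : ℕ} (c : KR k n) (hc : (c : KK k n) ∈ Kt k n t) : prD t c = c := by
  refine Kt_ind (p := fun c : KR k n => prD t c = c) ?_ ?_ ?_ c hc
  · rw [map_zero]
  · intro u v hu hv; rw [map_add, hu, hv]
  · intro f w hw
    rw [prD_tm, GradedAlgebra.proj_apply, DirectSum.decompose_of_mem_same (fun i : ℕ => ⋀[k]^i (S2 k n)) hw]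

lemma prD_ne {s t : ℕ} (h : s ≠ t) (c : KR k n) (hc : (c : KK k n) ∈ Kt k n s) : prD t c = 0 := by
  refine Kt_ind (p := fun c : KR k n => prD t c = 0) ?_ ?_ ?_ c hc
  · rw [map_zero]
  · intro u v hu hv; rw [map_add, hu, hv, add_zero]
  · intro f w hw
    rw [prD_tm, GradedAlgebra.proj_apply, DirectSum.decompose_of_mem_ne (fun i : ℕ => ⋀[k]^i (S2 k n)) hw h, map_zero]

lemma prD_mem (t : ℕ) (c : KR k n) : ((prD t c : KR k n) : KK k n) ∈ Kt k n t := by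
  refine TensorProduct.induction_on (motive := fun c : KK k n =>
    ((prD t (c : KR k n) : KR k n) : KK k n) ∈ Kt k n t) c ?_ ?_ ?_
  · exact (map_zero (prD t : KR k n →ₗ[k] KR k n)) ▸ zero_mem _
  · intro f w
    exact tm_mem t f _ (SetLike.coe_mem _)
  · intro u v hu hv
    exact (map_add (prD t : KR k n →ₗ[k] KR k n) u v) ▸ add_mem hu hv

lemma dK_mem [CharZero k] (t : ℕ) (f : S k n) (m : Fin (t+1) → S2 k n) :
    ((dK (tm f (ExteriorAlgebra.ιMulti k (t+1) m)) : KR k n) : KK k n) ∈ Kt k n t := by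
  rw [dK_wedge]
  refine Submodule.sum_mem (Kt k n t) fun j _ => ?_
  exact zsmul_mem (tm_mem _ _ _ (iM_mem _ _)) _

lemma dK_prD [CharZero k] (t : ℕ) (w : KR k n) : dK (prD (t+1) w) = prD t (dK w) := by
  refine TensorProduct.induction_on (motive := fun w : KK k n =>
    dK (prD (t+1) (w : KR k n)) = prD t (dK (w : KR k n))) w ?_ ?_ ?_
  · change dK (prD (t+1) (0 : KR k n)) = prD t (dK (0 : KR k n))
    simp
  · intro f w
    change dK (prD (t+1) (tm f w)) = prD t (dK (tm f w))
    have hw : w ∈ Submodule.span k (Set.range fun x : Σ r, (Fin r → S2 k n) =>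
      ExteriorAlgebra.ιMulti k x.1 x.2) := by rw [ExteriorAlgebra.ιMulti_span]; trivial
    induction hw using Submodule.span_induction with
    | mem x hx =>
      obtain ⟨⟨s, m⟩, rfl⟩ := hx
      change dK (prD (t+1) (tm f (ExteriorAlgebra.ιMulti k s m))) = prD t (dK (tm f (ExteriorAlgebra.ιMulti k s m)))
      have hm := tm_mem s f _ (iM_mem s m)
      cases s with
      | zero =>
        rw [prD_ne (by omega) _ hm, ExteriorAlgebra.ιMulti_zero_apply, dK_tm_one, map_zero, map_zero]
      | succ s =>
        by_cases h : s = t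
        · subst h
          rw [prD_same _ hm, prD_same _ (dK_mem s f m)]
        · rw [prD_ne (by omega) _ hm, prD_ne h _ (dK_mem s f m), map_zero]
    | zero => simp
    | add a b _ _ ha hb => simp only [map_add, ha, hb]
    | smul c a _ ha => simp only [map_smul, ha]
  · intro u v hu hv
    have aux : ∀ u v : KR k n, dK (prD (t+1) u) = prD t (dK u) → dK (prD (t+1) v) = prD t (dK v) →
        dK (prD (t+1) (u + v)) = prD t (dK (u + v)) := by
      intro u v hu hv
      simp only [map_add, hu, hv]
    exact aux u v hu hv

lemma D_eq [CharZero k] (D : ℕ → KK k n →ₗ[k] KK k n) (hD : IsKoszulDiff D) (t : ℕ) (c : KK k n)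
    (hc : c ∈ Kt k n t) : D t c = (dK (c : KR k n) : KR k n) := by
  refine Kt_ind' (p := fun c : KR k n => D t (c : KK k n) = (dK c : KR k n)) ?_ ?_ ?_ c hc
  · change D t 0 = _
    rw [map_zero, map_zero]; rfl
  · intro u v hu hv
    rw [map_add]
    exact (map_add (D t) _ _).trans (congrArg₂ _ hu hv)
  · intro f m
    cases t with
    | zero =>
      rw [hD.1, ExteriorAlgebra.ιMulti_zero_apply, dK_tm_one]; rfl
    | succ t => exact (hD.2 t f m).trans (dK_wedge t f m).symm

theorem final_aux [CharZero k] (D : ℕ → KK k n →ₗ[k] KK k n) (hD : IsKoszulDiff D)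
    (t : ℕ) (c : KK k n) (hc : c ∈ Kt k n t) (hcyc : D t c = 0) :
    ∃ u w : KK k n,
      u ∈ Submodule.span k {v : KK k n |
          ∃ (g : GL (Fin n) k) (s : ℕ) (μ : Fin s → Fin n), StrictMono μ ∧
            (∑ l, (μ l : ℕ)) = t ∧
            v = gact g (((List.finRange s).map (fun l => (Zel (μ l) : KK k n))).prod)} ∧
      w ∈ Kt k n (t+1) ∧ c = u + D (t+1) w := by
  rw [D_eq D hD t c hc] at hcyc
  obtain ⟨_, ⟨w, rfl⟩, u, hu, hcu⟩ := Submodule.mem_sup.1 (main_gen n (c : KR k n) hcyc)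
  refine ⟨(prD t u : KR k n), (prD (t+1) w : KR k n), ?_, prD_mem _ _, ?_⟩
  · clear hcu hc hcyc
    unfold UU at hu
    induction hu using Submodule.span_induction with
    | mem v hv =>
      obtain ⟨g, s, μ, hμ, rfl⟩ := hv
      have hm := Kt_phi (g : Matrix (Fin n) (Fin n) k) _ (Kt_zp s μ)
      by_cases h : (∑ l, (μ l : ℕ)) = t
      · subst h
        rw [prD_same _ hm]
        exact Submodule.subset_span ⟨g, s, μ, hμ, rfl, rfl⟩
      · rw [prD_ne h _ hm]; exact zero_mem _
    | zero => rw [map_zero]; exact zero_mem _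
    | add a b _ _ ha hb => rw [map_add]; exact add_mem ha hb
    | smul c a _ ha => rw [map_smul]; exact Submodule.smul_mem _ _ ha
  · rw [D_eq D hD _ _ (prD_mem _ _), dK_prD]
    have h1 := prD_same (c : KR k n) hc
    rw [← hcu, map_add] at h1
    rw [← hcu]
    exact (h1.symm).trans (add_comm _ _)

/-- Every Koszul cycle `c ∈ ker(d_t)` can be written as
`c = u + d_{t+1}(w)` with `w ∈ K_{t+1}` and `u` a `k`-linear combination of elements
`g • (Z_{μ_1} ⋯ Z_{μ_s})` with `g ∈ GL_n(k)` and `0 ≤ μ_1 < ⋯ < μ_s ≤ n-1`,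
`μ_1 + ⋯ + μ_s = t`; i.e. as a `k[GL_n(k)]`-module the Koszul homology `H_*(𝔪²)` is
generated by the squarefree monomials in `Z_0, …, Z_{n-1}`. -/
theorem koszul_homology_generated_by_squarefree_Z (k : Type) [Field k] [CharZero k] (n : ℕ)
    (D : ℕ → KK k n →ₗ[k] KK k n) (hD : IsKoszulDiff D)
    (t : ℕ) (c : KK k n) (hc : c ∈ Kt k n t) (hcyc : D t c = 0) :
    ∃ u w : KK k n,
      u ∈ Submodule.span k {v : KK k n |
          ∃ (g : GL (Fin n) k) (s : ℕ) (μ : Fin s → Fin n), StrictMono μ ∧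
            (∑ l, (μ l : ℕ)) = t ∧
            v = gact g (((List.finRange s).map (fun l => (Zel (μ l) : KK k n))).prod)} ∧
      w ∈ Kt k n (t+1) ∧ c = u + D (t+1) w := by
  exact final_aux D hD t c hc hcyc

end
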